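/- arXiv:1207.5811 — 3 statements merged into one kernel-verified Lean document; each statement's English description precedes it below -/
import Mathlib

section
/- Let n be a positive integer and s, t primes with n − φ(n) < s < t and s ≡ ±t (mod n). Then Φ_{ns} and Φ_{nt} have the same height, i.e., A(ns) = A(nt). -/
/-- The height of the `m`-th cyclotomic polynomial: the maximum absolute value of
its coefficients. -/
noncomputable def cyclotomicHeight (m : ℕ) : ℕ :=
  (Polynomial.cyclotomic m ℤ).support.sup
    fun k => ((Polynomial.cyclotomic m ℤ).coeff k).natAbs

open Polynomial in
/-- For `n > 1` the cyclotomic polynomial is palindromic. -/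
theorem aux_palin (n : ℕ) (hn : 1 < n) : (cyclotomic n ℤ).reverse = cyclotomic n ℤ := by
  have hn0 : n ≠ 0 := by omega
  have hprim := Complex.isPrimitiveRoot_exp n hn0
  set ζ := Complex.exp (2 * Real.pi * Complex.I / n) with hζ
  have hinv := hprim.inv
  have hz : ζ ≠ 0 := hprim.ne_zero hn0
  have hc0 : (cyclotomic n ℤ).coeff 0 = 1 := cyclotomic_coeff_zero ℤ hn
  have htd : (cyclotomic n ℤ).natTrailingDegree = 0 := by
    rw [natTrailingDegree_eq_zero]; right; rw [hc0]; exact one_ne_zero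
  have hmon : (cyclotomic n ℤ).reverse.Monic := by
    rw [Monic, reverse_leadingCoeff, trailingCoeff, htd, hc0]
  let _ : Invertible ζ⁻¹ := invertibleOfNonzero (inv_ne_zero hz)
  have hroot : aeval ζ (cyclotomic n ℤ).reverse = 0 := by
    have h := (eval₂_reverse_eq_zero_iff (algebraMap ℤ ℂ) ζ⁻¹ (cyclotomic n ℤ)).2 (by
      have := hinv.isRoot_cyclotomic (by omega)
      rw [IsRoot.def, ← map_cyclotomic_int, eval_map] at this
      exact this)
    rw [invOf_eq_inv, inv_inv] at h
    exact h
  have hdvd : cyclotomic n ℤ ∣ (cyclotomic n ℤ).reverse := by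
    rw [cyclotomic_eq_minpoly hprim (by omega)] at *
    exact minpoly.isIntegrallyClosed_dvd (hprim.isIntegral (by omega)) hroot
  exact (eq_of_monic_of_dvd_of_natDegree_le (cyclotomic.monic n ℤ) hmon hdvd
    (reverse_natDegree_le _))

open Polynomial in
theorem aux_palin_coeff (n : ℕ) (hn : 1 < n) (i : ℕ) (hi : i ≤ n.totient) :
    (cyclotomic n ℤ).coeff (n.totient - i) = (cyclotomic n ℤ).coeff i := by
  conv_rhs => rw [← aux_palin n hn]
  rw [coeff_reverse, natDegree_cyclotomic, revAt_le hi]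

/-- Partial sums `∑_{i < q} a_i c_{r - s i}` with `c` periodic modulo `n`. -/
def auxF (n : ℕ) (a c : ℕ → ℤ) (s r : ZMod n) (q : ℕ) : ℤ :=
  ∑ i ∈ Finset.range q, a i * c (r - s * i).val

theorem aux_H (n : ℕ) [NeZero n] (c : ℕ → ℤ) (hc : ∀ j, n ≤ j → c j = 0) (x : ZMod n) (J : ℕ) :
    (∑ j ∈ Finset.range J, if (j : ZMod n) = x then c j else 0)
      = if x.val < J then c x.val else 0 := by
  have : ∀ j ∈ Finset.range J, (if (j : ZMod n) = x then c j else 0)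
      = if x.val = j then c j else 0 := by
    intro j _
    rcases lt_or_ge j n with h | h
    · have : ((j : ZMod n) = x) ↔ x.val = j := by
        constructor
        · rintro rfl; exact ZMod.val_cast_of_lt h
        · rintro rfl; simp
      simp [this]
    · simp [hc j h]
  rw [Finset.sum_congr rfl this, Finset.sum_ite_eq]
  simp

/-- the restricted partial sums of coefficients -/
def auxT (n : ℕ) (R : ℕ → ℤ) (r : ZMod n) (M : ℕ) : ℤ :=
  ∑ k ∈ Finset.range M, if (k : ZMod n) = r then R k else 0

theorem auxT_add (n : ℕ) (R : ℕ → ℤ) (r : ZMod n) (M J : ℕ) :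
    auxT n R r (M + J) = auxT n R r M
      + ∑ j ∈ Finset.range J, if ((M + j : ℕ) : ZMod n) = r then R (M + j) else 0 := by
  rw [auxT, Finset.sum_range_add, auxT]

theorem auxT_block (n : ℕ) [NeZero n] (a c R : ℕ → ℤ) (s : ℕ)
    (hc : ∀ j, n ≤ j → c j = 0)
    (hR : ∀ i j, j < s → R (s * i + j) = a i * c j) (r : ZMod n) (i J : ℕ) (hJ : J ≤ s) :
    auxT n R r (s * i + J) = auxT n R r (s * i)
      + a i * (if (r - s * i).val < J then c (r - s * i).val else 0) := by
  rw [auxT_add, ← aux_H n c hc, Finset.mul_sum]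
  congr 1
  apply Finset.sum_congr rfl
  intro j hj
  rw [hR i j (by have := Finset.mem_range.1 hj; omega)]
  have : (((s * i + j : ℕ) : ZMod n) = r) ↔ ((j : ZMod n) = r - s * i) := by
    push_cast
    rw [eq_sub_iff_add_eq, add_comm]
  simp only [this, mul_ite, mul_zero]

theorem auxT_eq_F (n : ℕ) [NeZero n] (a c R : ℕ → ℤ) (s : ℕ)
    (hc : ∀ j, n ≤ j → c j = 0) (hcs : ∀ j, s ≤ j → c j = 0)
    (hR : ∀ i j, j < s → R (s * i + j) = a i * c j) (r : ZMod n) (q : ℕ) :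
    auxT n R r (s * q) = auxF n a c s r q := by
  induction q with
  | zero => simp [auxT, auxF]
  | succ q ih =>
    rw [Nat.mul_succ, auxT_block n a c R s hc hR r q s le_rfl, ih, auxF, auxF,
      Finset.sum_range_succ]
    congr 2
    split_ifs with h
    · rfl
    · rw [hcs _ (by omega)]

open Polynomial in
theorem auxT_coeff (n : ℕ) [NeZero n] (Q : ℤ[X]) (m : ℕ) :
    auxT n (fun k => (Q * (X ^ n - 1)).coeff k) (m : ZMod n) (m + 1) = - Q.coeff m := by
  have hn : 0 < n := NeZero.pos n
  induction m using Nat.strong_induction_on with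
  | _ m ih =>
    have hcoef : ∀ k, (Q * (X ^ n - 1)).coeff k = (if n ≤ k then Q.coeff (k - n) else 0)
        - Q.coeff k := by
      intro k
      rw [mul_sub, coeff_sub, coeff_mul_X_pow', mul_one]
    rcases lt_or_ge m n with h | h
    · have : ∀ k ∈ Finset.range (m + 1),
        (if (k : ZMod n) = (m : ZMod n) then (Q * (X ^ n - 1)).coeff k else 0)
          = if m = k then - Q.coeff k else 0 := by
        intro k hk
        have hk' := Finset.mem_range.1 hk
        have h1 : ((k : ZMod n) = (m : ZMod n)) ↔ m = k := by
          rw [ZMod.natCast_eq_natCast_iff', Nat.mod_eq_of_lt h, Nat.mod_eq_of_lt (by omega)]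
          exact eq_comm
        have h2 : ¬ n ≤ k := by omega
        rw [hcoef, if_neg h2]
        simp only [h1, zero_sub]
      rw [auxT, Finset.sum_congr rfl this, Finset.sum_ite_eq]
      simp
    · obtain ⟨d, rfl⟩ := Nat.exists_eq_add_of_le' h
      have ih' := ih d (by omega)
      rw [show d + n + 1 = (d + 1) + n by ring, auxT_add,
        show ((d + n : ℕ) : ZMod n) = (d : ZMod n) by simp, ih']
      have : ∀ j ∈ Finset.range n,
        (if ((d + 1 + j : ℕ) : ZMod n) = (d : ZMod n) then
          (Q * (X ^ n - 1)).coeff (d + 1 + j) else 0)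
          = if n - 1 = j then Q.coeff d - Q.coeff (d + n) else 0 := by
        intro j hj
        have hj' := Finset.mem_range.1 hj
        have h1 : (((d + 1 + j : ℕ) : ZMod n) = (d : ZMod n)) ↔ n - 1 = j := by
          constructor
          · intro h
            have h2 : ((1 + j : ℕ) : ZMod n) = 0 := by
              push_cast at h ⊢
              linear_combination h
            rw [ZMod.natCast_eq_zero_iff] at h2
            have := Nat.le_of_dvd (by omega) h2
            omega
          · rintro rfl
            rw [show d + 1 + (n - 1) = d + n by omega]
            simp
        by_cases h2 : n - 1 = j
        · rw [if_pos (h1.2 h2), if_pos h2, hcoef, if_pos (by omega)]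
          congr 2 <;> omega
        · rw [if_neg (fun h => h2 (h1.1 h)), if_neg h2]
      rw [Finset.sum_congr rfl this, Finset.sum_ite_eq, if_pos (by simp; omega)]
      ring

open Polynomial in
/-- The cofactor of the cyclotomic polynomial in `X ^ n - 1`. -/
theorem aux_exists_psi (n : ℕ) (hn : 0 < n) : ∃ G : ℤ[X], cyclotomic n ℤ * G = X ^ n - 1 ∧
    G.natDegree = n - n.totient := by
  obtain ⟨G, hG⟩ := cyclotomic.dvd_X_pow_sub_one n ℤ
  refine ⟨G, hG.symm, ?_⟩
  have h0 : (X ^ n - 1 : ℤ[X]) ≠ 0 := X_pow_sub_C_ne_zero hn 1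
  have hG0 : G ≠ 0 := by rintro rfl; simp [h0] at hG
  have h1 := congrArg natDegree hG
  rw [natDegree_mul (cyclotomic_ne_zero n ℤ) hG0, natDegree_cyclotomic] at h1
  have h2 : (X ^ n - 1 : ℤ[X]).natDegree = n := natDegree_X_pow_sub_C (n := n) (r := (1 : ℤ))
  omega

open Polynomial in
theorem aux_coeff_expand_mul (P G : ℤ[X]) (s : ℕ) (hs : 0 < s) (hG : G.natDegree < s)
    (i j : ℕ) (hj : j < s) :
    (expand ℤ s P * G).coeff (s * i + j) = P.coeff i * G.coeff j := by
  rw [coeff_mul]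
  rw [Finset.sum_eq_single (s * i, j)]
  · rw [mul_comm s i, coeff_expand_mul hs]
  · rintro ⟨u, v⟩ huv hne
    replace huv : u + v = s * i + j := Finset.HasAntidiagonal.mem_antidiagonal.1 huv
    show (expand ℤ s P).coeff u * G.coeff v = 0
    rcases lt_or_ge v s with hv | hv
    · rw [coeff_expand hs]
      split_ifs with hd
      · exfalso
        obtain ⟨w, rfl⟩ := hd
        apply hne
        have h1 : (s * w + v) % s = (s * i + j) % s := by rw [huv]
        rw [Nat.mul_add_mod, Nat.mul_add_mod, Nat.mod_eq_of_lt hv, Nat.mod_eq_of_lt hj] at h1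
        subst h1
        simp only [Prod.mk.injEq, and_true]
        omega
      · simp
    · rw [coeff_eq_zero_of_natDegree_lt (show G.natDegree < v by omega), mul_zero]
  · intro h
    simp at h

section
open Polynomial

theorem aux_R (n s : ℕ) (hs : s.Prime) (hd : ¬ s ∣ n) (G : ℤ[X])
    (hG : cyclotomic n ℤ * G = X ^ n - 1) :
    cyclotomic (n * s) ℤ * (X ^ n - 1) = expand ℤ s (cyclotomic n ℤ) * G := by
  rw [cyclotomic_expand_eq_cyclotomic_mul hs hd, ← hG, mul_assoc]

/-- coefficients are partial sums, precise form -/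
theorem aux_formula (n s : ℕ) [NeZero n] (hs : s.Prime) (hd : ¬ s ∣ n) (G : ℤ[X])
    (hG : cyclotomic n ℤ * G = X ^ n - 1) (hdeg : G.natDegree < s) (hdeg' : G.natDegree < n)
    (r : ZMod n) (q j : ℕ) (hj : j < s) (hr : ((s * q + j : ℕ) : ZMod n) = r) :
    - (cyclotomic (n * s) ℤ).coeff (s * q + j) =
      auxF n (cyclotomic n ℤ).coeff G.coeff s r q
      + (cyclotomic n ℤ).coeff q * (if (r - s * q).val < j + 1 then G.coeff (r - s * q).val
        else 0) := by
  have hc : ∀ j, n ≤ j → G.coeff j = 0 := fun j h =>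
    coeff_eq_zero_of_natDegree_lt (by omega)
  have hcs : ∀ j, s ≤ j → G.coeff j = 0 := fun j h =>
    coeff_eq_zero_of_natDegree_lt (by omega)
  have hR := aux_coeff_expand_mul (cyclotomic n ℤ) G s hs.pos hdeg
  rw [← auxT_coeff n, hr, aux_R n s hs hd G hG, add_assoc,
    auxT_block n _ _ _ s hc hR r q (j + 1) (by omega),
    auxT_eq_F n _ _ _ s hc hcs hR]

theorem auxF_succ (n : ℕ) (a c : ℕ → ℤ) (s r : ZMod n) (q : ℕ) :
    auxF n a c s r (q + 1) = auxF n a c s r q + a q * c (r - s * q).val := by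
  rw [auxF, Finset.sum_range_succ, auxF]

theorem aux_coeff_is_F (n s : ℕ) [NeZero n] (hs : s.Prime) (hd : ¬ s ∣ n) (G : ℤ[X])
    (hG : cyclotomic n ℤ * G = X ^ n - 1) (hdeg : G.natDegree < s) (hdeg' : G.natDegree < n)
    (m : ℕ) : ∃ q, m / s ≤ q ∧ - (cyclotomic (n * s) ℤ).coeff m =
      auxF n (cyclotomic n ℤ).coeff G.coeff s (m : ZMod n) q := by
  have h := aux_formula n s hs hd G hG hdeg hdeg' (m : ZMod n) (m / s) (m % s)
    (Nat.mod_lt _ hs.pos) (by rw [Nat.div_add_mod])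
  rw [Nat.div_add_mod] at h
  split_ifs at h with h1
  · exact ⟨m / s + 1, by omega, by rw [h, auxF_succ]⟩
  · exact ⟨m / s, le_rfl, by rw [h, mul_zero, add_zero]⟩

theorem aux_F_is_coeff (n s : ℕ) [NeZero n] (hs : s.Prime) (hd : ¬ s ∣ n) (G : ℤ[X])
    (hG : cyclotomic n ℤ * G = X ^ n - 1) (hdeg : G.natDegree < s) (hdeg' : G.natDegree < n)
    (r : ZMod n) (q : ℕ) : auxF n (cyclotomic n ℤ).coeff G.coeff s r q = 0 ∨
      ∃ m, - (cyclotomic (n * s) ℤ).coeff m =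
      auxF n (cyclotomic n ℤ).coeff G.coeff s r q := by
  induction q with
  | zero => left; simp [auxF]
  | succ q ih =>
    rw [auxF_succ]
    rcases lt_or_ge (r - s * q : ZMod n).val s with h | h
    · right
      refine ⟨s * q + (r - s * q : ZMod n).val, ?_⟩
      rw [aux_formula n s hs hd G hG hdeg hdeg' r q _ h (by simp), if_pos (by omega)]
    · rw [coeff_eq_zero_of_natDegree_lt (show G.natDegree < (r - s * q : ZMod n).val by omega),
        mul_zero, add_zero]
      exact ih

theorem auxF_stable (n : ℕ) (a c : ℕ → ℤ) (s r : ZMod n) (N q : ℕ) (ha : ∀ i, N ≤ i → a i = 0)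
    (hq : N ≤ q) : auxF n a c s r q = auxF n a c s r N := by
  induction q, hq using Nat.le_induction with
  | base => rfl
  | succ q hq ih => rw [auxF_succ, ih, ha q hq]; ring

theorem auxF_full (n s : ℕ) [NeZero n] (hs : s.Prime) (hd : ¬ s ∣ n) (G : ℤ[X])
    (hG : cyclotomic n ℤ * G = X ^ n - 1) (hdeg : G.natDegree < s) (hdeg' : G.natDegree < n)
    (r : ZMod n) (q : ℕ) (hq : n.totient + 1 ≤ q) :
    auxF n (cyclotomic n ℤ).coeff G.coeff s r q = 0 := by
  have hn : 0 < n := NeZero.pos n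
  have ha : ∀ i, n.totient + 1 ≤ i → (cyclotomic n ℤ).coeff i = 0 := fun i hi =>
    coeff_eq_zero_of_natDegree_lt (by rw [natDegree_cyclotomic]; omega)
  rw [auxF_stable n _ _ _ _ _ q ha hq]
  set B := s * (n.totient + 1) + (n * s).totient + 1
  set m := r.val + n * B with hm
  have hB : B ≤ m := by nlinarith [Nat.zero_le r.val]
  have hmr : (m : ZMod n) = r := by simp [hm]
  obtain ⟨q', h1, h2⟩ := aux_coeff_is_F n s hs hd G hG hdeg hdeg' m
  have h3 : n.totient + 1 ≤ m / s := by
    rw [Nat.le_div_iff_mul_le hs.pos, mul_comm]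
    have : s * (n.totient + 1) ≤ B := by simp only [B]; omega
    omega
  rw [hmr, auxF_stable n _ _ _ _ _ q' ha (by omega)] at h2
  rw [← h2, coeff_eq_zero_of_natDegree_lt, neg_zero]
  rw [natDegree_cyclotomic]
  have : (n * s).totient < B := by simp only [B]; omega
  omega

/-- reflection -/
theorem auxF_reflect (n : ℕ) (a c : ℕ → ℤ) (s r : ZMod n) (N q : ℕ)
    (ha : ∀ i, i ≤ N → a (N - i) = a i) (hq : q ≤ N + 1)
    (hfull : ∀ r, auxF n a c s r (N + 1) = 0) :
    auxF n a c (-s) r q = - auxF n a c s (r + s * N) (N + 1 - q) := by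
  have h := hfull (r + s * N)
  have hsplit : auxF n a c s (r + s * N) (N + 1) = auxF n a c s (r + s * N) (N + 1 - q)
      + ∑ i ∈ Finset.range q, a (N + 1 - q + i) *
        c (r + s * N - s * ((N + 1 - q + i : ℕ) : ZMod n)).val := by
    conv_lhs => rw [show N + 1 = (N + 1 - q) + q by omega]
    rw [auxF, Finset.sum_range_add, auxF]
  rw [h, ← Finset.sum_range_reflect] at hsplit
  have : auxF n a c (-s) r q = ∑ j ∈ Finset.range q, a (N + 1 - q + (q - 1 - j)) *
        c (r + s * N - s * ((N + 1 - q + (q - 1 - j) : ℕ) : ZMod n)).val := by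
    rw [auxF]
    apply Finset.sum_congr rfl
    intro j hj
    have hj' := Finset.mem_range.1 hj
    rw [show N + 1 - q + (q - 1 - j) = N - j by omega, ha j (by omega),
      Nat.cast_sub (by omega : j ≤ N)]
    congr 3
    ring
  rw [this]
  linarith

theorem aux_height_le (n s t : ℕ) [NeZero n] (hs : s.Prime) (ht : t.Prime) (hds : ¬ s ∣ n)
    (hdt : ¬ t ∣ n) (hns : n - n.totient < s) (hnt : n - n.totient < t)
    (hmod : (t : ZMod n) = s ∨ (t : ZMod n) = -s) :
    cyclotomicHeight (n * s) ≤ cyclotomicHeight (n * t) := by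
  have hn : 0 < n := NeZero.pos n
  obtain ⟨G, hG, hGd⟩ := aux_exists_psi n hn
  have hdeg' : G.natDegree < n := by have := Nat.totient_pos.2 hn; omega
  have key : ∀ r q, ∃ r' q', (auxF n (cyclotomic n ℤ).coeff G.coeff s r q).natAbs
      = (auxF n (cyclotomic n ℤ).coeff G.coeff t r' q').natAbs := by
    intro r q
    by_cases hmod' : (t : ZMod n) = s
    · exact ⟨r, q, by rw [hmod']⟩
    have hneg := hmod.resolve_left hmod'
    have hn1 : 1 < n := by
      by_contra h
      obtain rfl : n = 1 := by omega
      exact hmod' (Subsingleton.elim _ _)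
    rcases le_or_gt q (n.totient + 1) with hq | hq
    · refine ⟨r + t * (n.totient : ℕ), n.totient + 1 - q, ?_⟩
      have hst : (s : ZMod n) = - t := by rw [hneg, neg_neg]
      rw [hst, auxF_reflect n _ _ _ r n.totient q (fun i hi => aux_palin_coeff n hn1 i hi) hq,
        Int.natAbs_neg]
      intro r
      exact auxF_full n t ht hdt G hG (by omega) hdeg' r _ le_rfl
    · refine ⟨0, 0, ?_⟩
      rw [auxF_full n s hs hds G hG (by omega) hdeg' r q (by omega)]
      simp [auxF]
  unfold cyclotomicHeight
  apply Finset.sup_le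
  intro k _
  obtain ⟨q, -, h⟩ := aux_coeff_is_F n s hs hds G hG (by omega) hdeg' k
  obtain ⟨r', q', h'⟩ := key k q
  rw [← Int.natAbs_neg, h, h']
  rcases aux_F_is_coeff n t ht hdt G hG (by omega) hdeg' r' q' with h0 | ⟨m, hm⟩
  · simp [h0]
  · rw [← hm, Int.natAbs_neg]
    by_cases hz : (cyclotomic (n * t) ℤ).coeff m = 0
    · simp [hz]
    · exact Finset.le_sup (f := fun k => ((cyclotomic (n * t) ℤ).coeff k).natAbs)
        (mem_support_iff.2 hz)

end

theorem cyclotomic_extended_periodicity (n s t : ℕ) (hn : 0 < n)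
    (hs : s.Prime) (ht : t.Prime) (hns : n - n.totient < s) (hst : s < t)
    (hmod : (s : ℤ) ≡ (t : ℤ) [ZMOD (n : ℤ)] ∨ (s : ℤ) ≡ -(t : ℤ) [ZMOD (n : ℤ)]) :
    cyclotomicHeight (n * s) = cyclotomicHeight (n * t) := by
  have _ : NeZero n := ⟨by omega⟩
  have hmod' : (s : ZMod n) = t ∨ (s : ZMod n) = -t := by
    rcases hmod with h | h
    · left
      have := (ZMod.intCast_eq_intCast_iff _ _ n).2 h
      simpa using this
    · right
      have := (ZMod.intCast_eq_intCast_iff _ _ n).2 h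
      simpa using this
  have hdiv : ∀ d : ℕ, d ∣ n → (d ∣ s ↔ d ∣ t) := by
    intro d hd
    have hd' : (d : ℤ) ∣ n := by exact_mod_cast hd
    rw [← Int.natCast_dvd_natCast, ← Int.natCast_dvd_natCast (n := t)]
    rcases hmod with h | h
    · have h1 : (d : ℤ) ∣ (t : ℤ) - s := hd'.trans h.dvd
      exact (dvd_iff_dvd_of_dvd_sub h1).symm
    · have h1 : (d : ℤ) ∣ -(t : ℤ) - s := hd'.trans h.dvd
      rw [← dvd_neg (b := (t : ℤ))]
      exact (dvd_iff_dvd_of_dvd_sub h1).symm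
  have hds : ¬ s ∣ n := fun h =>
    hst.ne ((Nat.prime_dvd_prime_iff_eq hs ht).1 ((hdiv s h).1 dvd_rfl))
  have hdt : ¬ t ∣ n := fun h =>
    hst.ne' ((Nat.prime_dvd_prime_iff_eq ht hs).1 ((hdiv t h).2 dvd_rfl))
  apply le_antisymm
  · refine aux_height_le n s t hs ht hds hdt hns (by omega) ?_
    rcases hmod' with h | h
    · exact Or.inl h.symm
    · right; rw [h, neg_neg]
  · exact aux_height_le n t s ht hs hdt hds (by omega) hns hmod'
end

section
/- Let p, q, r be primes with (p, q, r pairwise distinct) and let w be an integer with r ≡ w (mod pq). Then the height of Φ_{pqr} satisfies A(pqr) ≤ |w|. -/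
theorem ediv_sub_pred (M i : ℤ) (hM : 0 < M) :
    i / M - (i - 1) / M = if M ∣ i then 1 else 0 := by
  split_ifs with h
  · obtain ⟨k, rfl⟩ := h
    have h1 : (M * k - 1) / M = k - 1 := by
      rw [Int.ediv_eq_iff_of_pos hM]
      constructor <;> nlinarith
    rw [h1, Int.mul_ediv_cancel_left _ hM.ne']; ring
  · have h0 := Int.emod_add_mul_ediv i M
    have h1 := Int.emod_nonneg i hM.ne'
    have h2 := Int.emod_lt_of_pos i hM
    have h3 : i % M ≠ 0 := fun h' => h (Int.dvd_of_emod_eq_zero h')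
    have h4 : (i - 1) / M = i / M := by
      rw [Int.ediv_eq_iff_of_pos hM]
      have : 1 ≤ i % M := by omega
      constructor <;> nlinarith
    rw [h4]; ring

/-- Mixed second difference of `i ↦ ⌊i / M⌋`. -/
def Gam (M a b i : ℤ) : ℤ := i / M - (i - a) / M - (i - b) / M + (i - a - b) / M

theorem add_mul_ediv' (M i t : ℤ) (hM : 0 < M) : (i + M * t) / M = i / M + t :=
  Int.add_mul_ediv_left _ _ hM.ne'

theorem Gam_shift (M a b i t : ℤ) (hM : 0 < M) : Gam M a b (i + M * t) = Gam M a b i := by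
  unfold Gam
  rw [show i + M * t - a - b = (i - a - b) + M * t by ring,
    show i + M * t - a = (i - a) + M * t by ring,
    show i + M * t - b = (i - b) + M * t by ring]
  simp only [add_mul_ediv' _ _ _ hM]
  ring

theorem Gam_neg (M a b i : ℤ) (hM : 0 < M) :
    Gam M a b i = - Gam M (-a) (-b) (-i - 1) := by
  have key : ∀ x : ℤ, x / M = - ((-x - 1) / M) - 1 := by
    intro x
    rw [Int.ediv_eq_iff_of_pos hM]
    have h0 := Int.emod_add_mul_ediv (-x - 1) M
    have h1 := Int.emod_nonneg (-x - 1) hM.ne'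
    have h2 := Int.emod_lt_of_pos (-x - 1) hM
    constructor <;> nlinarith
  unfold Gam
  rw [key i, key (i - a), key (i - b), key (i - a - b)]
  rw [show -(i - a - b) - 1 = -i - 1 - -a - -b by ring,
    show -(i - a) - 1 = -i - 1 - -a by ring, show -(i - b) - 1 = -i - 1 - -b by ring]
  ring

theorem const_of_step (f : ℤ → ℤ) (h : ∀ i, f i = f (i - 1)) (i : ℤ) : f i = f 0 := by
  induction i using Int.induction_on with
  | zero => rfl
  | succ n ih => rw [h]; simpa using ih
  | pred n ih => rw [← ih, h (-(n:ℤ))]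

theorem Gam_tele (M u t p q i : ℤ) (W : ℕ) (hM : 0 < M) (hu : u * W = 1 + M * t) :
    Gam M p q i = ∑ l ∈ Finset.range W, Gam M (u * p) (u * q) (u * (i - l)) := by
  have hdvd : ∀ x : ℤ, M ∣ u * x ↔ M ∣ x := by
    intro x
    constructor
    · rintro ⟨k, hk⟩
      exact ⟨k * W - t * x, by linear_combination (W : ℤ) * hk - x * hu⟩
    · intro h; exact h.mul_left u
  let T : ℤ → ℤ := fun i => u * i / M - (u * i - u * p) / M
  let V : ℤ → ℤ := fun i => i / M - (i - p) / M
  let S : ℤ → ℤ := fun i => ∑ l ∈ Finset.range W, T (i - l)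
  have hV : ∀ i, V i - V (i - 1) = (if M ∣ i then 1 else 0) - (if M ∣ i - p then 1 else 0) := by
    intro i
    rw [← ediv_sub_pred M i hM, ← ediv_sub_pred M (i - p) hM]
    simp only [V]
    rw [show i - 1 - p = i - p - 1 by ring]; ring
  have hS : ∀ i, S i - S (i - 1) = (if M ∣ i then 1 else 0) - (if M ∣ i - p then 1 else 0) := by
    intro i
    have h1 : S i - S (i - 1) = T i - T (i - W) := by
      have := Finset.sum_range_sub' (fun l : ℕ => T (i - l)) W
      simp only [S]
      rw [← Finset.sum_sub_distrib]
      simp only [Nat.cast_zero, sub_zero] at this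
      rw [← this]
      apply Finset.sum_congr rfl
      intro l _
      congr 2
      push_cast; ring
    rw [h1]
    have h2 : T (i - W) = (u * i - 1) / M - (u * (i - p) - 1) / M := by
      simp only [T]
      rw [show u * (i - W) - u * p = (u * (i - p) - 1) + M * (-t) by linear_combination -hu,
        show u * (i - W) = (u * i - 1) + M * (-t) by linear_combination -hu]
      simp only [add_mul_ediv' _ _ _ hM]
      ring
    have e1 := ediv_sub_pred M (u * i) hM
    have e2 := ediv_sub_pred M (u * (i - p)) hM
    simp only [hdvd] at e1 e2
    rw [h2, ← e1, ← e2]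
    simp only [T]
    rw [show u * i - u * p = u * (i - p) by ring]; ring
  have hc := const_of_step (fun i => V i - S i) (fun i => by
    have := hV i; have := hS i; linarith)
  have h1 := hc i
  have h2 := hc (i - q)
  have h3 : V i - V (i - q) = S i - S (i - q) := by linarith
  have h4 : Gam M p q i = V i - V (i - q) := by
    simp only [Gam, V]
    rw [show i - p - q = i - q - p by ring]; ring
  rw [h4, h3]
  simp only [S]
  rw [← Finset.sum_sub_distrib]
  apply Finset.sum_congr rfl
  intro l _
  simp only [T, Gam]
  rw [show u * (i - q - l) - u * p = u * (i - l) - u * p - u * q by ring,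
    show u * (i - q - l) = u * (i - l) - u * q by ring]
  ring

/-- Partial sums of the coefficient sequence. -/
def Cs (a : ℕ → ℤ) (k : ℤ) : ℤ := ∑ j ∈ Finset.range (k + 1).toNat, a j

theorem B_formula (a : ℕ → ℤ) (M : ℤ) (hM : 0 < M) (k : ℤ) (N : ℕ) (hN : (N : ℤ) < M) :
    ∑ j ∈ Finset.range (N + 1), a j * ((k - j) / M) =
      Cs a N * (k / M) + if k % M < N then Cs a (k % M) - Cs a N else 0 := by
  have hc0 : k % M + M * (k / M) = k := Int.emod_add_mul_ediv k M
  have h1 := Int.emod_nonneg k hM.ne'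
  have h2 := Int.emod_lt_of_pos k hM
  obtain ⟨k0, hk0⟩ : ∃ k0 : ℕ, (k0 : ℤ) = k % M := ⟨(k % M).toNat, by omega⟩
  have hdiv : ∀ j : ℕ, (j : ℤ) < M → (k - j) / M = k / M - if k0 < j then 1 else 0 := by
    intro j hj
    split_ifs with h
    · have : (k0 : ℤ) < j := by exact_mod_cast h
      rw [Int.ediv_eq_iff_of_pos hM]
      constructor <;> nlinarith
    · have : (j : ℤ) ≤ k0 := by exact_mod_cast not_lt.mp h
      rw [Int.ediv_eq_iff_of_pos hM]
      constructor <;> nlinarith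
  rw [← hk0]
  have e : ∀ n : ℕ, Cs a n = ∑ j ∈ Finset.range (n + 1), a j := by
    intro n; simp only [Cs]; congr 2
  rw [e, e]
  clear e hk0 h1 h2 hc0
  induction N with
  | zero => simp
  | succ N ih =>
    rw [Finset.sum_range_succ, ih (by push_cast at hN; linarith), Finset.sum_range_succ _ (N + 1),
      hdiv (N + 1) hN]
    rcases lt_trichotomy k0 N with h | h | h
    · have h' : k0 < N + 1 := by omega
      have g : (k0 : ℤ) < N := by exact_mod_cast h
      have g' : (k0 : ℤ) < (N + 1 : ℕ) := by exact_mod_cast h'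
      simp only [h', g, g', if_true]; ring
    · subst h
      simp [Finset.sum_range_succ]; ring
    · have h' : ¬ k0 < N + 1 := by omega
      have g : ¬ (k0 : ℤ) < N := by push_cast; omega
      have g' : ¬ (k0 : ℤ) < (N + 1 : ℕ) := by push_cast; omega
      simp only [h', g, g', if_false]; ring

theorem staircase (x1 x2 y1 y2 T : ℤ) :
    |(if x1 + y1 < T then (1:ℤ) else 0) - (if x2 + y1 < T then 1 else 0)
      - (if x1 + y2 < T then 1 else 0) + (if x2 + y2 < T then 1 else 0)| ≤ 1 := by
  split_ifs <;> first | (exfalso; omega) | norm_num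

theorem Cs_one (a : ℕ → ℤ) (p q : ℤ) (hp : 0 < p) (hq : 0 < q) (hcop : IsCoprime p q)
    (hrec : ∀ k : ℤ, Cs a k = Cs a (k - q) + if 0 ≤ k ∧ k < p * q ∧ p ∣ k then 1 else 0)
    (x : ℤ) (hx0 : 0 ≤ x) (hxq : x < q) :
    (∀ y : ℕ, (y : ℤ) < p → Cs a (x * p + y * q - p * q) = 0) ∧
    (∀ y : ℕ, (y : ℤ) < p → Cs a (x * p + y * q) = 1) := by
  have hdv : ∀ y : ℤ, 0 < y → y < p → ∀ s : ℤ, ¬ p ∣ x * p + y * q + p * s := by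
    intro y h0 h1 s hd
    have : p ∣ y * q := by
      have h2 : p ∣ x * p + p * s := ⟨x + s, by ring⟩
      have := dvd_sub hd h2
      rwa [show x * p + y * q + p * s - (x * p + p * s) = y * q by ring] at this
    have := hcop.dvd_of_dvd_mul_right this
    have := Int.le_of_dvd h0 this
    linarith
  have hneg : ∀ k : ℤ, k < 0 → Cs a k = 0 := by
    intro k hk
    have : (k + 1).toNat = 0 := by omega
    simp [Cs, this]
  have A : ∀ y : ℕ, (y : ℤ) < p → Cs a (x * p + y * q - p * q) = 0 := by
    intro y
    induction y with
    | zero => intro _; apply hneg; push_cast; nlinarith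
    | succ y ih =>
      intro hy
      rw [hrec, if_neg, add_zero]
      · rw [show x * p + ((y + 1 : ℕ) : ℤ) * q - p * q - q = x * p + y * q - p * q by push_cast; ring]
        exact ih (by push_cast at hy; linarith)
      · rintro ⟨_, _, h⟩
        apply hdv ((y + 1 : ℕ) : ℤ) (by positivity) hy (-q)
        convert h using 1; ring
  refine ⟨A, ?_⟩
  intro y
  induction y with
  | zero =>
    intro _
    rw [hrec, if_pos]
    · have := A (p - 1).toNat (by omega)
      rw [show (((p - 1).toNat : ℕ) : ℤ) = p - 1 by omega] at this
      rw [show x * p + ((0 : ℕ) : ℤ) * q - q = x * p + (p - 1) * q - p * q by push_cast; ring, this]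
      norm_num
    · refine ⟨by push_cast; nlinarith, by push_cast; nlinarith, ⟨x, by push_cast; ring⟩⟩
  | succ y ih =>
    intro hy
    rw [hrec, if_neg, add_zero]
    · rw [show x * p + ((y + 1 : ℕ) : ℤ) * q - q = x * p + y * q by push_cast; ring]
      exact ih (by push_cast at hy; linarith)
    · rintro ⟨_, _, h⟩
      apply hdv ((y + 1 : ℕ) : ℤ) (by positivity) hy 0
      convert h using 1; ring

theorem exists_rep (p q : ℤ) (hcop : IsCoprime p q) (m : ℤ) : ∃ x y : ℤ, m = x * p + y * q := by
  obtain ⟨s, t, h⟩ := hcop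
  exact ⟨m * s, m * t, by linear_combination -m * h⟩

theorem key_bound (a : ℕ → ℤ) (p q : ℤ) (hp : 0 < p) (hq : 0 < q) (hcop : IsCoprime p q)
    (hrec : ∀ k : ℤ, Cs a k = Cs a (k - q) + if 0 ≤ k ∧ k < p * q ∧ p ∣ k then 1 else 0)
    (N : ℕ) (hN : (N : ℤ) < p * q) (m s t : ℤ) :
    |∑ j ∈ Finset.range (N + 1), a j * Gam (p * q) (s * p) (t * q) (m - j)| ≤ 1 := by
  have hM : 0 < p * q := mul_pos hp hq
  let B : ℤ → ℤ := fun k => ∑ j ∈ Finset.range (N + 1), a j * ((k - j) / (p * q))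
  have hB : ∑ j ∈ Finset.range (N + 1), a j * Gam (p * q) (s * p) (t * q) (m - j)
      = B m - B (m - s * p) - B (m - t * q) + B (m - s * p - t * q) := by
    simp only [B]
    rw [← Finset.sum_sub_distrib, ← Finset.sum_sub_distrib, ← Finset.sum_add_distrib]
    apply Finset.sum_congr rfl
    intro j _
    simp only [Gam]
    rw [show m - s * p - t * q - j = m - j - s * p - t * q by ring,
      show m - s * p - j = m - j - s * p by ring,
      show m - t * q - j = m - j - t * q by ring]
    ring
  have hBf : ∀ k, B k = Cs a N * (k / (p * q)) +
      if k % (p * q) < N then Cs a (k % (p * q)) - Cs a N else 0 :=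
    fun k => B_formula a (p * q) hM k N hN
  -- values on the fundamental box
  have hval : ∀ x y : ℤ, 0 ≤ x → x < q → 0 ≤ y → y < p →
      Cs a (x * p + y * q) = 1 ∧ Cs a (x * p + y * q - p * q) = 0 := by
    intro x y hx0 hxq hy0 hyp
    obtain ⟨h1, h2⟩ := Cs_one a p q hp hq hcop hrec x hx0 hxq
    lift y to ℕ using hy0
    exact ⟨h2 y hyp, h1 y hyp⟩
  have hbox : ∀ x y : ℤ, 0 ≤ x → x < q → 0 ≤ y → y < p →
      0 ≤ x * p + y * q ∧ x * p + y * q < 2 * (p * q) := by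
    intro x y hx0 hxq hy0 hyp
    constructor
    · positivity
    · nlinarith
  have hred : ∀ x y : ℤ, B (x * p + y * q) =
      B ((x % q) * p + (y % p) * q) + Cs a N * (x / q) + Cs a N * (y / p) := by
    intro x y
    have e : x * p + y * q = ((x % q) * p + (y % p) * q) + (p * q) * (x / q + y / p) := by
      have h1 := Int.emod_add_mul_ediv x q
      have h2 := Int.emod_add_mul_ediv y p
      linear_combination -p * h1 - q * h2
    rw [e, hBf, hBf, add_mul_ediv' _ _ _ hM, Int.add_mul_emod_self_left]
    ring
  have hsplit : ∀ v : ℤ, 0 ≤ v → v < 2 * (p * q) →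
      (v < p * q ∧ v / (p * q) = 0 ∧ v % (p * q) = v) ∨
      (p * q ≤ v ∧ v / (p * q) = 1 ∧ v % (p * q) = v - p * q) := by
    intro v h0 h1
    rcases lt_or_ge v (p * q) with h | h
    · exact Or.inl ⟨h, Int.ediv_eq_zero_of_lt h0 h, Int.emod_eq_of_lt h0 h⟩
    · refine Or.inr ⟨h, ?_, ?_⟩
      · rw [Int.ediv_eq_iff_of_pos hM]; constructor <;> linarith
      · rw [← Int.sub_emod_right, Int.emod_eq_of_lt] <;> linarith
  have hmb : ∀ x y : ℤ, 0 ≤ x % q ∧ x % q < q ∧ 0 ≤ y % p ∧ y % p < p := fun x y =>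
    ⟨Int.emod_nonneg _ hq.ne', Int.emod_lt_of_pos _ hq, Int.emod_nonneg _ hp.ne',
      Int.emod_lt_of_pos _ hp⟩
  have hcN : Cs a N = 0 ∨ Cs a N = 1 := by
    obtain ⟨x, y, hxy⟩ := exists_rep p q hcop N
    obtain ⟨b1, b2, b3, b4⟩ := hmb x y
    obtain ⟨v1, v2⟩ := hval _ _ b1 b2 b3 b4
    obtain ⟨c1, c2⟩ := hbox _ _ b1 b2 b3 b4
    have e : (N : ℤ) % (p * q) = ((x % q) * p + (y % p) * q) % (p * q) := by
      have h1 := Int.emod_add_mul_ediv x q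
      have h2 := Int.emod_add_mul_ediv y p
      rw [show (N : ℤ) = ((x % q) * p + (y % p) * q) + (p * q) * (x / q + y / p) by
        linear_combination hxy - p * h1 - q * h2, Int.add_mul_emod_self_left]
    rw [Int.emod_eq_of_lt (by positivity) hN] at e
    rcases hsplit _ c1 c2 with ⟨_, _, h⟩ | ⟨_, _, h⟩
    · right; rw [e, h, v1]
    · left; rw [e, h, v2]
  have hG : ∃ (T c : ℤ) (σ : ℤ), (σ = 1 ∨ σ = -1) ∧ ∀ x y : ℤ, 0 ≤ x → x < q → 0 ≤ y → y < p →
      B (x * p + y * q) = c + σ * if x * p + y * q < T then 1 else 0 := by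
    rcases hcN with hc | hc
    · refine ⟨N, 0, 1, Or.inl rfl, ?_⟩
      intro x y b1 b2 b3 b4
      obtain ⟨v1, v2⟩ := hval _ _ b1 b2 b3 b4
      obtain ⟨c1, c2⟩ := hbox _ _ b1 b2 b3 b4
      rw [hBf, hc]
      rcases hsplit _ c1 c2 with ⟨h0, h1, h⟩ | ⟨h0, h1, h⟩
      · rw [h, v1]; simp
      · rw [h, v2, if_neg (show ¬ x * p + y * q < N by linarith)]; simp
    · refine ⟨p * q + N, 1, -1, Or.inr rfl, ?_⟩
      intro x y b1 b2 b3 b4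
      obtain ⟨v1, v2⟩ := hval _ _ b1 b2 b3 b4
      obtain ⟨c1, c2⟩ := hbox _ _ b1 b2 b3 b4
      rw [hBf, hc]
      rcases hsplit _ c1 c2 with ⟨h0, h1, h⟩ | ⟨h0, h1, h⟩
      · rw [h, h1, v1, if_pos (show x * p + y * q < p * q + N by linarith)]; simp
      · rw [h, h1, v2]
        by_cases g : x * p + y * q < p * q + N
        · rw [if_pos g, if_pos (by linarith)]; norm_num
        · rw [if_neg g, if_neg (by linarith)]; norm_num
  obtain ⟨T, c, σ, hσ, hG⟩ := hG
  obtain ⟨x, y, hxy⟩ := exists_rep p q hcop m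
  rw [hB, hxy, show x * p + y * q - s * p - t * q = (x - s) * p + (y - t) * q by ring,
    show x * p + y * q - s * p = (x - s) * p + y * q by ring,
    show x * p + y * q - t * q = x * p + (y - t) * q by ring,
    hred x y, hred (x - s) y, hred x (y - t), hred (x - s) (y - t)]
  obtain ⟨b1, b2, b3, b4⟩ := hmb x y
  obtain ⟨d1, d2, d3, d4⟩ := hmb (x - s) (y - t)
  rw [hG _ _ b1 b2 b3 b4, hG _ _ d1 d2 b3 b4, hG _ _ b1 b2 d3 d4, hG _ _ d1 d2 d3 d4]
  have st := staircase (x % q * p) ((x - s) % q * p) (y % p * q) ((y - t) % p * q) T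
  rw [abs_le] at st ⊢
  rcases hσ with rfl | rfl <;> constructor <;> linarith [st.1, st.2]

theorem twisted_bound (a : ℕ → ℤ) (p q : ℤ) (hp : 0 < p) (hq : 0 < q) (hcop : IsCoprime p q)
    (hrec : ∀ k : ℤ, Cs a k = Cs a (k - q) + if 0 ≤ k ∧ k < p * q ∧ p ∣ k then 1 else 0)
    (N : ℕ) (hN : (N : ℤ) < p * q) (n r w : ℤ) (hrw : r ≡ w [ZMOD (p * q)])
    (hw : IsCoprime w (p * q)) :
    |∑ j ∈ Finset.range (N + 1), a j * Gam (p * q) p q (n - r * j)| ≤ w.natAbs := by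
  have hM : 0 < p * q := mul_pos hp hq
  obtain ⟨u, t, hut⟩ : ∃ u t : ℤ, u * (w.natAbs : ℤ) = 1 + (p * q) * t := by
    obtain ⟨b, c, h⟩ := hw
    rcases Int.natAbs_eq w with e | e
    · exact ⟨b, -c, by rw [← e]; linear_combination h⟩
    · refine ⟨-b, -c, ?_⟩
      rw [show (w.natAbs : ℤ) = -w by linarith]; linear_combination h
  obtain ⟨z, hz⟩ := hrw.dvd
  have hsum : ∑ j ∈ Finset.range (N + 1), a j * Gam (p * q) p q (n - r * j) =
      ∑ l ∈ Finset.range w.natAbs, ∑ j ∈ Finset.range (N + 1),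
        a j * Gam (p * q) (u * p) (u * q) (u * (n - r * j - l)) := by
    rw [Finset.sum_comm]
    apply Finset.sum_congr rfl
    intro j _
    rw [← Finset.mul_sum, ← Gam_tele (p * q) u t p q _ _ hM hut]
  rw [hsum]
  refine (Finset.abs_sum_le_sum_abs _ _).trans ?_
  refine (Finset.sum_le_sum (g := fun _ => (1 : ℤ)) ?_).trans (by simp)
  intro l _
  rcases Int.natAbs_eq w with e | e
  · refine le_of_eq_of_le ?_ (key_bound a p q hp hq hcop hrec N hN (u * (n - l)) u u)
    congr 1
    apply Finset.sum_congr rfl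
    intro j _
    congr 1
    rw [show u * (n - r * j - l) = (u * (n - l) - j) + (p * q) * (j * (u * z - t)) by
      rw [← e] at hut
      linear_combination (-(j : ℤ)) * hut + j * u * hz, Gam_shift _ _ _ _ _ hM]
  · refine le_of_eq_of_le ?_ (key_bound a p q hp hq hcop hrec N hN (-(u * (n - l)) - 1) (-u) (-u))
    rw [← abs_neg, ← Finset.sum_neg_distrib]
    congr 1
    apply Finset.sum_congr rfl
    intro j _
    rw [show u * (n - r * j - l) = (u * (n - l) + j) + (p * q) * (j * (u * z + t)) by
      have e' : (w.natAbs : ℤ) = -w := by linarith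
      rw [e'] at hut
      linear_combination ((j : ℤ)) * hut + j * u * hz, Gam_shift _ _ _ _ _ hM, Gam_neg _ _ _ _ hM]
    rw [show -(u * (n - l) + j) - 1 = -(u * (n - l)) - 1 - j by ring]
    simp

theorem Cs_sub (f : Polynomial ℤ) (k q : ℕ) :
    (f * ∑ i ∈ Finset.range q, Polynomial.X ^ i).coeff k =
      Cs f.coeff k - Cs f.coeff (k - q) := by
  induction q with
  | zero => simp
  | succ q ih =>
    rw [Finset.sum_range_succ, mul_add, Polynomial.coeff_add, ih, Polynomial.coeff_mul_X_pow']
    split_ifs with h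
    · have e1 : ((k : ℤ) - q + 1).toNat = (k - q) + 1 := by omega
      have e2 : ((k : ℤ) - (q + 1 : ℕ) + 1).toNat = k - q := by omega
      simp only [Cs, e1, e2, Finset.sum_range_succ]
      ring
    · have e1 : ((k : ℤ) - q + 1).toNat = 0 := by omega
      have e2 : ((k : ℤ) - (q + 1 : ℕ) + 1).toNat = 0 := by omega
      simp only [Cs, e1, e2]
      simp

theorem cyc_rec (p q : ℕ) (hp : p.Prime) (hq : q.Prime) (hpq : p ≠ q) (k : ℤ) :
    Cs (Polynomial.cyclotomic (p * q) ℤ).coeff k =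
      Cs (Polynomial.cyclotomic (p * q) ℤ).coeff (k - q) +
        if 0 ≤ k ∧ k < (p : ℤ) * q ∧ (p : ℤ) ∣ k then 1 else 0 := by
  rcases lt_or_ge k 0 with hk | hk
  · have e1 : (k + 1).toNat = 0 := by omega
    have e2 : (k - q + 1).toNat = 0 := by omega
    rw [if_neg (by omega)]
    simp [Cs, e1, e2]
  · lift k to ℕ using hk
    have := Fact.mk hq
    have hdiv : ¬ p ∣ q := fun h => hpq ((Nat.prime_dvd_prime_iff_eq hp hq).mp h)
    have h1 := Polynomial.cyclotomic_expand_eq_cyclotomic_mul (R := ℤ) hp hdiv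
    rw [mul_comm q p] at h1
    have h2 := Cs_sub (Polynomial.cyclotomic (p * q) ℤ) k q
    rw [← Polynomial.cyclotomic_prime ℤ q, ← h1, Polynomial.coeff_expand hp.pos] at h2
    rw [← sub_eq_iff_eq_add', ← h2, Polynomial.cyclotomic_prime, Polynomial.finsetSum_coeff]
    simp only [Polynomial.coeff_X_pow, Finset.sum_ite_eq, Finset.mem_range]
    by_cases hd : p ∣ k
    · obtain ⟨c, rfl⟩ := hd
      have hc : (((p * c : ℕ) : ℤ) < (p : ℤ) * q) ↔ c < q := by
        rw [← Nat.cast_mul, Nat.cast_lt]; exact Nat.mul_lt_mul_left hp.pos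
      have hd' : (p : ℤ) ∣ ((p * c : ℕ) : ℤ) := by exact_mod_cast Dvd.intro _ rfl
      rw [if_pos (Dvd.intro _ rfl), Nat.mul_div_cancel_left _ hp.pos]
      simp only [hc, hd', Nat.cast_nonneg, true_and, and_true]
    · rw [if_neg hd, if_neg]
      rintro ⟨_, _, h⟩
      exact hd (by exact_mod_cast h)

/-- The power series `1 / ((1 - X) (1 - X ^ M))`. -/
noncomputable def Eser (M : ℕ) : PowerSeries ℤ := PowerSeries.mk fun i => ((i / M : ℕ) : ℤ) + 1

theorem Eser_mul (M : ℕ) (hM : 0 < M) :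
    (1 - PowerSeries.X) * (1 - PowerSeries.X ^ M) * Eser M = 1 := by
  have h1 : (1 - PowerSeries.X) * Eser M = PowerSeries.mk fun i => if M ∣ i then (1 : ℤ) else 0 := by
    ext i
    rw [sub_mul, one_mul, map_sub, ← pow_one (PowerSeries.X : PowerSeries ℤ),
      PowerSeries.coeff_X_pow_mul']
    simp only [Eser, PowerSeries.coeff_mk]
    rcases i with _ | i
    · simp
    · rw [if_pos (by omega), Nat.succ_div]
      simp only [Nat.add_sub_cancel]
      split_ifs <;> push_cast <;> ring
  rw [mul_comm (1 - PowerSeries.X), mul_assoc, h1]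
  ext i
  rw [sub_mul, one_mul, map_sub, PowerSeries.coeff_X_pow_mul', PowerSeries.coeff_one]
  simp only [PowerSeries.coeff_mk]
  by_cases hi : M ≤ i
  · rw [if_pos hi, if_neg (show i ≠ 0 by omega)]
    have : (M ∣ i - M) ↔ M ∣ i := by
      constructor
      · intro h
        have := dvd_add h (dvd_refl M)
        rwa [Nat.sub_add_cancel hi] at this
      · intro h; exact Nat.dvd_sub h (dvd_refl M)
    simp only [this, sub_self]
  · rw [if_neg hi]
    by_cases h0 : i = 0
    · simp [h0]
    · rw [if_neg h0, if_neg]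
      · simp
      · intro h; exact hi (Nat.le_of_dvd (Nat.pos_of_ne_zero h0) h)

theorem Eser_coeff (M a i : ℕ) (hM : 0 < M) (ha : a ≤ M) :
    PowerSeries.coeff i (PowerSeries.X ^ a * Eser M) = ((i : ℤ) - a) / (M : ℤ) + 1 := by
  rw [PowerSeries.coeff_X_pow_mul']
  split_ifs with h
  · simp only [Eser, PowerSeries.coeff_mk]
    push_cast [h]
    rfl
  · have : ((i : ℤ) - a) / (M : ℤ) = -1 := by
      rw [Int.ediv_eq_iff_of_pos (by exact_mod_cast hM)]
      constructor <;> omega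
    rw [this]; norm_num

theorem Gser_coeff (M p q i : ℕ) (hM : 0 < M) (h : p + q ≤ M) :
    PowerSeries.coeff i ((1 - PowerSeries.X ^ p) * (1 - PowerSeries.X ^ q) * Eser M)
      = Gam M p q i := by
  have e : (1 - PowerSeries.X ^ p) * (1 - PowerSeries.X ^ q) * Eser M =
      PowerSeries.X ^ 0 * Eser M - PowerSeries.X ^ p * Eser M - PowerSeries.X ^ q * Eser M
        + PowerSeries.X ^ (p + q) * Eser M := by ring
  rw [e, map_add, map_sub, map_sub, Eser_coeff M 0 i hM (by omega), Eser_coeff M p i hM (by omega),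
    Eser_coeff M q i hM (by omega), Eser_coeff M (p + q) i hM h]
  simp only [Gam]
  push_cast
  rw [show (i : ℤ) - (p + q) = i - p - q by ring, sub_zero]
  ring

theorem cyc_pq (p q : ℕ) (hp : p.Prime) (hq : q.Prime) (hpq : p ≠ q) :
    Polynomial.cyclotomic (p * q) ℤ * ((1 - Polynomial.X ^ p) * (1 - Polynomial.X ^ q)) =
      (1 - Polynomial.X) * (1 - Polynomial.X ^ (p * q)) := by
  have := Fact.mk hq
  have hdiv : ¬ p ∣ q := fun h => hpq ((Nat.prime_dvd_prime_iff_eq hp hq).mp h)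
  have h1 := Polynomial.cyclotomic_expand_eq_cyclotomic_mul (R := ℤ) hp hdiv
  rw [mul_comm q p] at h1
  have h2 := Polynomial.cyclotomic_prime_mul_X_sub_one ℤ q
  have h3 := congrArg (Polynomial.expand ℤ p) h2
  simp only [map_mul, map_sub, map_pow, map_one, Polynomial.expand_X, ← pow_mul] at h3
  rw [h1] at h3
  linear_combination (Polynomial.cyclotomic (p * q) ℤ * (Polynomial.X ^ p - 1)) * (-h2)
    + (Polynomial.X - 1) * h3

theorem coeff_formula (p q r n : ℕ) (hp : p.Prime) (hq : q.Prime) (hr : r.Prime)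
    (hpq : p ≠ q) (hpr : p ≠ r) (hqr : q ≠ r) :
    (Polynomial.cyclotomic (p * q * r) ℤ).coeff n =
      ∑ j ∈ Finset.range (n / r + 1), (Polynomial.cyclotomic (p * q) ℤ).coeff j *
        Gam ((p : ℤ) * q) p q (n - r * j) := by
  have hM : 0 < p * q := Nat.mul_pos hp.pos hq.pos
  have hle : p + q ≤ p * q := by nlinarith [hp.two_le, hq.two_le]
  have hdiv : ¬ r ∣ p * q := by
    intro h
    rcases (Nat.Prime.dvd_mul hr).mp h with h | h
    · exact hpr ((Nat.prime_dvd_prime_iff_eq hr hp).mp h).symm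
    · exact hqr ((Nat.prime_dvd_prime_iff_eq hr hq).mp h).symm
  have h1 := Polynomial.cyclotomic_expand_eq_cyclotomic_mul (R := ℤ) hr hdiv
  set f := Polynomial.cyclotomic (p * q) ℤ with hf
  set F := Polynomial.cyclotomic (p * q * r) ℤ with hF
  let G : PowerSeries ℤ := (1 - PowerSeries.X ^ p) * (1 - PowerSeries.X ^ q) * Eser (p * q)
  have hfG : (f : PowerSeries ℤ) * G = 1 := by
    have h := congrArg (fun P : Polynomial ℤ => (P : PowerSeries ℤ)) (cyc_pq p q hp hq hpq)
    simp only [Polynomial.coe_mul, Polynomial.coe_sub, Polynomial.coe_pow, Polynomial.coe_X,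
      Polynomial.coe_one] at h
    rw [← Eser_mul (p * q) hM, ← h]
    simp only [G, hf]
    ring
  have hFG : (F : PowerSeries ℤ) = ((Polynomial.expand ℤ r f : Polynomial ℤ) : PowerSeries ℤ) * G := by
    rw [h1, Polynomial.coe_mul, mul_assoc, hfG, mul_one]
  rw [← Polynomial.coeff_coe, hFG, PowerSeries.coeff_mul,
    Finset.Nat.sum_antidiagonal_eq_sum_range_succ_mk]
  have hsub : (Finset.range (n / r + 1)).image (fun j => r * j) ⊆ Finset.range n.succ := by
    intro i hi
    simp only [Finset.mem_image, Finset.mem_range] at hi ⊢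
    obtain ⟨j, hj, rfl⟩ := hi
    have := (Nat.le_div_iff_mul_le hr.pos).mp (Nat.lt_succ_iff.mp hj)
    rw [mul_comm]; omega
  rw [← Finset.sum_subset hsub, Finset.sum_image]
  · apply Finset.sum_congr rfl
    intro j hj
    have := (Nat.le_div_iff_mul_le hr.pos).mp (Nat.lt_succ_iff.mp (Finset.mem_range.mp hj))
    rw [Polynomial.coeff_coe, Polynomial.coeff_expand hr.pos, if_pos (Dvd.intro _ rfl),
      Nat.mul_div_cancel_left _ hr.pos, Gser_coeff _ _ _ _ hM hle]
    rw [mul_comm] at this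
    push_cast [this]
    rfl
  · intro x _ y _ h
    exact Nat.eq_of_mul_eq_mul_left hr.pos h
  · intro i hi hni
    rw [Polynomial.coeff_coe, Polynomial.coeff_expand hr.pos, if_neg, zero_mul]
    rintro ⟨c, rfl⟩
    apply hni
    simp only [Finset.mem_image, Finset.mem_range] at hi ⊢
    refine ⟨c, ?_, rfl⟩
    rw [Nat.lt_succ_iff, Nat.le_div_iff_mul_le hr.pos, mul_comm]; omega

theorem cyclotomic_pqr_height_le (p q r : ℕ)
    (hp : p.Prime) (hq : q.Prime) (hr : r.Prime)
    (hpq : p ≠ q) (hpr : p ≠ r) (hqr : q ≠ r)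
    (w : ℤ) (hmod : (r : ℤ) ≡ w [ZMOD ((p * q : ℕ) : ℤ)]) :
    cyclotomicHeight (p * q * r) ≤ w.natAbs := by
  unfold cyclotomicHeight
  apply Finset.sup_le
  intro n hn
  have hnd := Polynomial.le_natDegree_of_mem_supp n hn
  rw [Polynomial.natDegree_cyclotomic] at hnd
  have hcp : Nat.Coprime (p * q) r :=
    Nat.Coprime.mul_left ((Nat.coprime_primes hp hr).mpr hpr) ((Nat.coprime_primes hq hr).mpr hqr)
  rw [Nat.totient_mul hcp, Nat.totient_prime hr] at hnd
  have hN : n / r < p * q := by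
    rw [Nat.div_lt_iff_lt_mul hr.pos]
    have h1 := Nat.totient_le (p * q)
    have h2 : 0 < p * q := Nat.mul_pos hp.pos hq.pos
    calc n ≤ (p * q).totient * (r - 1) := hnd
      _ ≤ (p * q) * (r - 1) := Nat.mul_le_mul_right _ h1
      _ < (p * q) * r := Nat.mul_lt_mul_of_pos_left (Nat.sub_lt hr.pos one_pos) h2
  have hcop : IsCoprime (p : ℤ) q :=
    Nat.isCoprime_iff_coprime.mpr ((Nat.coprime_primes hp hq).mpr hpq)
  push_cast at hmod
  have hw : IsCoprime w ((p : ℤ) * q) := by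
    have h1 : IsCoprime (r : ℤ) ((p : ℤ) * q) := by
      have := Nat.isCoprime_iff_coprime.mpr hcp.symm
      push_cast at this
      exact this
    obtain ⟨z, hz⟩ := hmod.dvd
    rw [show w = r + (p : ℤ) * q * z by linarith]
    exact h1.add_mul_left_left z
  have := twisted_bound (Polynomial.cyclotomic (p * q) ℤ).coeff p q (by exact_mod_cast hp.pos)
    (by exact_mod_cast hq.pos) hcop (cyc_rec p q hp hq hpq) (n / r) (by exact_mod_cast hN) n r w
    hmod hw
  rw [← coeff_formula p q r n hp hq hr hpq hpr hqr] at this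
  rw [Int.abs_eq_natAbs] at this
  exact_mod_cast this
end

section
/- Let p < q < r be odd primes such that r ≡ 2 (mod pq) or r ≡ −2 (mod pq), and suppose q ≢ 1 (mod p). Then A(pqr) = 2. -/
open PowerSeries in
theorem aux_coeff_mul (f : PowerSeries ℤ) (d n : ℕ) :
    coeff n (f * (1 - X ^ d)) = coeff n f - if d ≤ n then coeff (n - d) f else 0 := by
  rw [mul_sub, mul_one, map_sub, coeff_mul_X_pow']

open Polynomial in
theorem aux_cyc (p q : ℕ) (hp : p.Prime) (hq : q.Prime) (hpq : p < q) :
    cyclotomic (p * q) ℤ * ((1 - X ^ p) * (1 - X ^ q)) = (1 - X) * (1 - X ^ (p * q)) := by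
  have := Fact.mk hp
  have h1 := cyclotomic_expand_eq_cyclotomic_mul (n := p) hq
    (fun h => absurd (Nat.le_of_dvd hp.pos h) (by omega)) ℤ
  have h2 := cyclotomic_prime_mul_X_sub_one ℤ p
  have h3 := congrArg (expand ℤ q) h2
  simp only [map_mul, map_sub, map_pow, expand_X, map_one] at h3
  rw [h1] at h3
  rw [pow_mul']
  linear_combination (X - 1) * h3 - (cyclotomic (p * q) ℤ) * (X ^ q - 1) * h2

/-- membership in the numerical semigroup -/
def inS (p q n : ℕ) : Prop := ∃ x y : ℕ, n = x * p + y * q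

open Classical in
noncomputable def sInd (p q n : ℕ) : ℤ := if inS p q n then 1 else 0

def chiF (p q : ℕ) (j : ℤ) : ℤ :=
  (if j % ((p * q : ℕ) : ℤ) < p then 1 else 0) -
  (if (q : ℤ) ≤ j % ((p * q : ℕ) : ℤ) ∧ j % ((p * q : ℕ) : ℤ) < q + p then 1 else 0)

theorem one_sub_ne (d : ℕ) (hd : 0 < d) : (1 - PowerSeries.X ^ d : PowerSeries ℤ) ≠ 0 := by
  intro h
  have := congrArg (PowerSeries.coeff 0) h
  rw [map_sub, PowerSeries.coeff_X_pow, if_neg hd.ne] at this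
  simp at this

open PowerSeries in
theorem semigroup_step (p q n : ℕ) (hp : p.Prime) (hq : q.Prime) (hpq : p < q) :
    sInd p q n - (if p ≤ n then sInd p q (n - p) else 0) =
      if q ∣ n ∧ n < p * q then 1 else 0 := by
  classical
  have hcop : Nat.Coprime p q := (Nat.coprime_primes hp hq).2 hpq.ne
  have hp0 := hp.pos
  have hq0 := hq.pos
  have key : (inS p q n ∧ ¬ (p ≤ n ∧ inS p q (n - p))) ↔ (q ∣ n ∧ n < p * q) := by
    constructor
    · rintro ⟨⟨x, y, rfl⟩, h⟩
      have hx : x = 0 := by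
        by_contra hx
        obtain ⟨x', rfl⟩ := Nat.exists_eq_succ_of_ne_zero hx
        apply h
        have : (x' + 1) * p + y * q = (x' * p + y * q) + p := by ring
        refine ⟨by simp only [Nat.succ_eq_add_one]; omega, x', y, ?_⟩
        simp only [Nat.succ_eq_add_one]; omega
      subst hx
      refine ⟨⟨y, by ring⟩, ?_⟩
      by_contra hlt
      have hy : p ≤ y := by
        by_contra hy
        push Not at hy
        apply hlt
        simp only [zero_mul, zero_add]
        exact Nat.mul_lt_mul_of_pos_right hy hq0
      obtain ⟨z, rfl⟩ := Nat.exists_eq_add_of_le hy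
      obtain ⟨w, rfl⟩ := Nat.exists_eq_add_of_lt hq0
      have : 0 * p + (p + z) * (0 + w + 1) = (w * p + z * (0 + w + 1)) + p := by ring
      exact h ⟨by omega, w, z, by omega⟩
    · rintro ⟨⟨y, rfl⟩, hlt⟩
      refine ⟨⟨0, y, by ring⟩, ?_⟩
      rintro ⟨hle, x', y', h⟩
      have h' : (x' + 1) * p + y' * q = q * y := by
        have : (x' + 1) * p + y' * q = (x' * p + y' * q) + p := by ring
        omega
      have hyp : y < p := by
        by_contra hc
        push Not at hc
        nlinarith
      have hyy : y' < y := by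
        by_contra hc
        push Not at hc
        nlinarith
      obtain ⟨z, rfl⟩ := Nat.exists_eq_add_of_lt hyy
      have h2 : (x' + 1) * p = (z + 1) * q := by nlinarith
      have h3 : p ∣ (z + 1) * q := ⟨x' + 1, by rw [← h2]; ring⟩
      have h4 := Nat.le_of_dvd (by omega) (hcop.dvd_of_dvd_mul_right h3)
      omega
  have mono : (p ≤ n ∧ inS p q (n - p)) → inS p q n := by
    rintro ⟨h, x, y, hxy⟩
    refine ⟨x + 1, y, ?_⟩
    have : (x + 1) * p + y * q = (x * p + y * q) + p := by ring
    omega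
  unfold sInd
  by_cases h1 : inS p q n <;> by_cases h2 : p ≤ n <;> by_cases h3 : inS p q (n - p) <;>
    by_cases h4 : (q ∣ n ∧ n < p * q) <;> simp only [h1, h2, h3, h4, if_true, if_false] <;>
    simp_all

open PowerSeries in
theorem H_eq (p q : ℕ) (hp : p.Prime) (hq : q.Prime) (hpq : p < q) :
    (Polynomial.cyclotomic (p * q) ℤ : PowerSeries ℤ) =
      PowerSeries.mk (fun n => sInd p q n) * (1 - X ^ 1) := by
  have hp0 := hp.pos
  have hq0 := hq.pos
  set H : PowerSeries ℤ := PowerSeries.mk (fun n => sInd p q n) with hH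
  have h1 : H * (1 - X ^ p) = PowerSeries.mk (fun n => if q ∣ n ∧ n < p * q then (1:ℤ) else 0) := by
    ext n
    rw [aux_coeff_mul, coeff_mk, hH, coeff_mk, coeff_mk, semigroup_step p q n hp hq hpq]
  have h2 : PowerSeries.mk (fun n => if q ∣ n ∧ n < p * q then (1:ℤ) else 0) * (1 - X ^ q)
      = 1 - X ^ (p * q) := by
    ext n
    have hpq0 : 0 < p * q := Nat.mul_pos hp0 hq0
    have hle : q ≤ p * q := Nat.le_mul_of_pos_left q hp0
    rw [aux_coeff_mul, coeff_mk, coeff_mk, map_sub, coeff_one, coeff_X_pow]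
    by_cases hd : q ∣ n
    · obtain ⟨y, rfl⟩ := hd
      rcases Nat.eq_zero_or_pos y with rfl | hy
      · simp [hq0.ne', hp0.ne', hp0, hq0]
      · have e1 : q ≤ q * y := Nat.le_mul_of_pos_right q hy
        have e2 : q ∣ q * y - q := Nat.dvd_sub (dvd_mul_right _ _) dvd_rfl
        have e3 : q * y < p * q ↔ y < p := by rw [mul_comm]; exact Nat.mul_lt_mul_right hq0
        have e4 : q * y - q < p * q ↔ y ≤ p := by
          have : q * y < (p + 1) * q ↔ y < p + 1 := by
            rw [mul_comm]; exact Nat.mul_lt_mul_right hq0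
          have h5 : (p + 1) * q = p * q + q := by ring
          omega
        have e5 : q * y = p * q ↔ y = p := by
          rw [mul_comm]; exact Nat.mul_left_inj hq0.ne'
        have e6 : q * y ≠ 0 := by positivity
        simp only [e1, e2, e3, e4, e5, e6, dvd_mul_right, true_and, if_true, if_false]
        split_ifs <;> omega
    · have e1 : n ≠ 0 := by rintro rfl; simp at hd
      have e2 : n ≠ p * q := by rintro rfl; simp at hd
      by_cases hn : q ≤ n
      · have e3 : ¬ q ∣ n - q := by
          intro h; exact hd (by have := Nat.dvd_add h (dvd_refl q); rwa [Nat.sub_add_cancel hn] at this)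
        simp [hd, e1, e2, e3]
      · simp [hd, e1, e2, hn]
  have h3 := congrArg (fun f : Polynomial ℤ => (f : PowerSeries ℤ)) (aux_cyc p q hp hq hpq)
  simp only [Polynomial.coe_mul, Polynomial.coe_sub, Polynomial.coe_one, Polynomial.coe_pow,
    Polynomial.coe_X] at h3
  have h4 := mul_ne_zero (one_sub_ne p hp0) (one_sub_ne q hq0)
  apply mul_right_cancel₀ h4
  rw [h3, ← h2, ← h1]
  ring

theorem sum_a (p q : ℕ) (hp : p.Prime) (hq : q.Prime) (hpq : p < q) (n : ℕ) :
    ∑ m ∈ Finset.range (n + 1), (Polynomial.cyclotomic (p * q) ℤ).coeff m = sInd p q n := by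
  have h : ∀ n, (Polynomial.cyclotomic (p * q) ℤ).coeff n =
      sInd p q n - if 1 ≤ n then sInd p q (n - 1) else 0 := by
    intro n
    rw [← Polynomial.coeff_coe, H_eq p q hp hq hpq, aux_coeff_mul, PowerSeries.coeff_mk,
      PowerSeries.coeff_mk]
  induction n with
  | zero => simp [h]
  | succ k ih => rw [Finset.sum_range_succ, ih, h]; simp

open PowerSeries in
theorem C_mul (p q : ℕ) (hp : p.Prime) (hq : q.Prime) (hp3 : 3 ≤ p) (hpq : p < q) :
    PowerSeries.mk (fun n : ℕ => chiF p q n) *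
      (Polynomial.cyclotomic (p * q) ℤ : PowerSeries ℤ) = 1 := by
  have hp0 := hp.pos
  have hq0 := hq.pos
  have hlt : p + q ≤ p * q := by nlinarith
  set C := PowerSeries.mk (fun n : ℕ => chiF p q n) with hC
  have h1 : PowerSeries.mk (fun n => if n < p then (1:ℤ) else 0) * (1 - X ^ 1) = 1 - X ^ p := by
    ext n
    rw [aux_coeff_mul, coeff_mk, coeff_mk, map_sub, coeff_one, coeff_X_pow]
    split_ifs <;> omega
  have h2 : C * (1 - X ^ (p * q)) =
      PowerSeries.mk (fun n => if n < p then (1:ℤ) else 0) * (1 - X ^ q) := by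
    ext n
    rw [aux_coeff_mul, aux_coeff_mul, hC, coeff_mk, coeff_mk, coeff_mk, coeff_mk]
    by_cases hn : p * q ≤ n
    · have : chiF p q ((n - p * q : ℕ) : ℤ) = chiF p q n := by
        unfold chiF
        rw [Nat.cast_sub hn, Int.sub_emod_right]
      rw [if_pos hn, this]
      split_ifs <;> omega
    · rw [if_neg hn]
      have : ((n:ℤ) % ((p * q : ℕ) : ℤ)) = n := Int.emod_eq_of_lt (by omega) (by omega)
      unfold chiF
      rw [this]
      generalize p * q = w at *
      split_ifs <;> omega
  have h3 := congrArg (fun f : Polynomial ℤ => (f : PowerSeries ℤ)) (aux_cyc p q hp hq hpq)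
  simp only [Polynomial.coe_mul, Polynomial.coe_sub, Polynomial.coe_one, Polynomial.coe_pow,
    Polynomial.coe_X] at h3
  have h4 := mul_ne_zero (one_sub_ne 1 one_pos) (one_sub_ne (p * q) (Nat.mul_pos hp0 hq0))
  apply mul_right_cancel₀ h4
  linear_combination h3 + (Polynomial.cyclotomic (p * q) ℤ : PowerSeries ℤ) * (1 - X ^ 1) * h2
    + (Polynomial.cyclotomic (p * q) ℤ : PowerSeries ℤ) * (1 - X ^ q) * h1

theorem key_coeff (p q : ℕ) (hp : p.Prime) (hq : q.Prime) (hp3 : 3 ≤ p) (hpq : p < q)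
    (R : ℕ) (hR : 0 < R) (Q : Polynomial ℤ)
    (hQ : Polynomial.expand ℤ R (Polynomial.cyclotomic (p * q) ℤ) =
      Q * Polynomial.cyclotomic (p * q) ℤ) (n : ℕ) :
    Q.coeff n = ∑ m ∈ Finset.range (n / R + 1),
      (Polynomial.cyclotomic (p * q) ℤ).coeff m * chiF p q (n - R * m) := by
  set P := Polynomial.cyclotomic (p * q) ℤ with hP
  set C := PowerSeries.mk (fun n : ℕ => chiF p q n) with hC
  have h1 : (Q : PowerSeries ℤ) = C * (Polynomial.expand ℤ R P : Polynomial ℤ) := by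
    have := C_mul p q hp hq hp3 hpq
    rw [hQ, Polynomial.coe_mul]
    linear_combination (-(Q : PowerSeries ℤ)) * this
  have hnR : 0 ≤ n / R := Nat.zero_le _
  obtain ⟨K, hK⟩ : ∃ K, K = P.natDegree + 1 + (n / R + 1) := ⟨_, rfl⟩
  have h2 : (Polynomial.expand ℤ R P : Polynomial ℤ) =
      ∑ m ∈ Finset.range K, Polynomial.C (P.coeff m) * Polynomial.X ^ (R * m) := by
    conv_lhs => rw [P.as_sum_range_C_mul_X_pow' (n := K) (by rw [hK]; generalize n / R = z; omega)]
    simp [map_sum, pow_mul]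
  have h3 : (Q : PowerSeries ℤ) =
      ∑ m ∈ Finset.range K, PowerSeries.C (P.coeff m) * (C * PowerSeries.X ^ (R * m)) := by
    rw [h1, h2, ← Polynomial.coeToPowerSeries.ringHom_apply, map_sum, Finset.mul_sum]
    refine Finset.sum_congr rfl fun m _ => ?_
    rw [Polynomial.coeToPowerSeries.ringHom_apply, Polynomial.coe_mul, Polynomial.coe_C,
      Polynomial.coe_pow, Polynomial.coe_X]
    ring
  rw [← Polynomial.coeff_coe, h3, map_sum]
  symm
  have hmul : ∀ m, R * m ≤ n ↔ m < n / R + 1 := by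
    intro m
    rw [Nat.lt_succ_iff, Nat.le_div_iff_mul_le hR, mul_comm]
  refine (Finset.sum_congr rfl ?_).trans (Finset.sum_subset
    (f := fun m => (PowerSeries.coeff n) (PowerSeries.C (P.coeff m) * (C * PowerSeries.X ^ (R * m))))
    (s₁ := Finset.range (n / R + 1)) ?_ ?_)
  · intro m hm
    have hm' := (hmul m).2 (Finset.mem_range.1 hm)
    rw [PowerSeries.coeff_C_mul, PowerSeries.coeff_mul_X_pow', if_pos hm', hC, PowerSeries.coeff_mk]
    push_cast [Nat.cast_sub hm']
    rfl
  · intro m hm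
    rw [Finset.mem_range] at *
    omega
  · intro m _ hm
    have hm' : ¬ R * m ≤ n := by rw [hmul]; simpa using hm
    rw [PowerSeries.coeff_C_mul, PowerSeries.coeff_mul_X_pow', if_neg hm', mul_zero]

open Polynomial in
theorem expand_two (p q : ℕ) (hp : p.Prime) (hq : q.Prime) (hpo : Odd p) (hqo : Odd q)
    (hpq : p < q) :
    expand ℤ 2 (cyclotomic (p * q) ℤ) =
      (cyclotomic (p * q) ℤ).comp (-X) * cyclotomic (p * q) ℤ := by
  have h := aux_cyc p q hp hq hpq
  have h1 := congrArg (fun f : Polynomial ℤ => f.comp (-X)) h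
  have h2 := congrArg (expand ℤ 2) h
  simp only [mul_comp, sub_comp, pow_comp, X_comp, one_comp, hpo.neg_pow, hqo.neg_pow,
    (hpo.mul hqo).neg_pow] at h1
  simp only [map_mul, map_sub, map_pow, expand_X, map_one] at h2
  have hne : ∀ d, 0 < d → (1 - (X ^ 2) ^ d : ℤ[X]) ≠ 0 := by
    intro d hd h
    have := congrArg (eval 0) h
    simp [hd.ne'] at this
  apply mul_right_cancel₀ (mul_ne_zero (hne p hp.pos) (hne q hq.pos))
  rw [h2]
  have e : ∀ d : ℕ, ((X : ℤ[X]) ^ 2) ^ d = (X ^ d) ^ 2 := fun d => by rw [← pow_mul, ← pow_mul, mul_comm]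
  rw [e, e, e]
  linear_combination (-(1 + X) * (1 + X ^ (p * q))) * h - 
    (cyclotomic (p * q) ℤ * ((1 - X ^ p) * (1 - X ^ q))) * h1

open Polynomial in
theorem palin (p q : ℕ) (hp : p.Prime) (hq : q.Prime) (hpq : p < q) (m : ℕ)
    (hm : m ≤ (cyclotomic (p * q) ℤ).natDegree) :
    (cyclotomic (p * q) ℤ).coeff ((cyclotomic (p * q) ℤ).natDegree - m) =
      (cyclotomic (p * q) ℤ).coeff m := by
  have hr : ∀ d, 0 < d → (1 - X ^ d : ℤ[X]).reverse = - (1 - X ^ d) := by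
    intro d hd
    have hdeg : (1 - X ^ d : ℤ[X]).natDegree = d := by
      rw [← natDegree_neg, neg_sub]
      exact natDegree_X_pow_sub_C (r := (1 : ℤ))
    have h0 := reflect_monomial (R := ℤ) d 0
    rw [pow_zero, revAt_le (Nat.zero_le _)] at h0
    rw [reverse, hdeg, reflect_sub, reflect_monomial, revAt_le le_rfl, h0]
    simp
  have h := aux_cyc p q hp hq hpq
  have h1 := congrArg reverse h
  have hX := hr 1 one_pos
  rw [pow_one] at hX
  rw [reverse_mul_of_domain, reverse_mul_of_domain, reverse_mul_of_domain, hr p hp.pos,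
    hr q hq.pos, hr _ (Nat.mul_pos hp.pos hq.pos), hX] at h1
  have hne : ∀ d, 0 < d → (1 - X ^ d : ℤ[X]) ≠ 0 := by
    intro d hd h
    have := congrArg (eval 0) h
    simp [hd.ne'] at this
  have h2 : (cyclotomic (p * q) ℤ).reverse = cyclotomic (p * q) ℤ := by
    apply mul_right_cancel₀ (mul_ne_zero (hne p hp.pos) (hne q hq.pos))
    linear_combination h1 - h
  conv_rhs => rw [← h2]
  rw [coeff_reverse, revAt_le hm]

theorem coeff_comp_neg (P : Polynomial ℤ) (n : ℕ) :
    (P.comp (-Polynomial.X)).coeff n = P.coeff n * (-1) ^ n := by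
  rw [← Polynomial.comp_C_mul_X_coeff]
  simp

/-- coefficients of the binary cyclotomic polynomial -/
noncomputable def aC (p q n : ℕ) : ℤ := (Polynomial.cyclotomic (p * q) ℤ).coeff n

noncomputable def FF (p q L : ℕ) (N : ℤ) : ℤ :=
  ∑ m ∈ Finset.range L, aC p q m * chiF p q (N - 2 * m)

theorem chiF_congr (p q : ℕ) {a b : ℤ} (h : a ≡ b [ZMOD ((p * q : ℕ) : ℤ)]) :
    chiF p q a = chiF p q b := by
  unfold chiF
  rw [h]

theorem FF_congr (p q L : ℕ) {a b : ℤ} (h : a ≡ b [ZMOD ((p * q : ℕ) : ℤ)]) :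
    FF p q L a = FF p q L b := by
  unfold FF
  refine Finset.sum_congr rfl fun m _ => ?_
  rw [chiF_congr p q (h.sub_right _)]

theorem FF_full (p q : ℕ) (hp : p.Prime) (hq : q.Prime) (hp3 : 3 ≤ p) (hpq : p < q)
    (hpo : Odd p) (hqo : Odd q) (N : ℕ) :
    FF p q (N / 2 + 1) N = aC p q N * (-1) ^ N := by
  have := key_coeff p q hp hq hp3 hpq 2 two_pos _ (expand_two p q hp hq hpo hqo hpq) N
  rw [coeff_comp_neg] at this
  unfold FF aC
  rw [this]
  rfl

theorem sum_a' (p q : ℕ) (hp : p.Prime) (hq : q.Prime) (hpq : p < q) (A B : ℕ) (h : A ≤ B) :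
    ∑ m ∈ Finset.Ico (A + 1) (B + 1), aC p q m = sInd p q B - sInd p q A := by
  rw [Finset.sum_Ico_eq_sub _ (by omega)]
  unfold aC
  rw [sum_a p q hp hq hpq, sum_a p q hp hq hpq]

theorem sInd_01 (p q n : ℕ) : sInd p q n = 0 ∨ sInd p q n = 1 := by
  unfold sInd
  split_ifs <;> simp

theorem range_01 (p q : ℕ) (hp : p.Prime) (hq : q.Prime) (hpq : p < q) (n : ℕ) :
    ∑ m ∈ Finset.range n, aC p q m = 0 ∨ ∑ m ∈ Finset.range n, aC p q m = 1 := by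
  cases n with
  | zero => simp
  | succ k => unfold aC; rw [sum_a p q hp hq hpq]; exact sInd_01 p q k

theorem window (p q : ℕ) (hp : p.Prime) (hq : q.Prime) (hpq : p < q) (A B T : ℕ) :
    |∑ m ∈ Finset.Ico A B, aC p q m * (if T ≤ m then 1 else 0)| ≤ 1 := by
  have : ∑ m ∈ Finset.Ico A B, aC p q m * (if T ≤ m then 1 else 0) =
      ∑ m ∈ Finset.Ico (max A T) B, aC p q m := by
    simp only [mul_ite, mul_one, mul_zero]
    rw [← Finset.sum_filter]
    congr 1
    ext m
    simp only [Finset.mem_filter, Finset.mem_Ico]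
    omega
  rw [this]
  by_cases h : max A T ≤ B
  · rw [Finset.sum_Ico_eq_sub _ h]
    rcases range_01 p q hp hq hpq B with h1 | h1 <;>
    rcases range_01 p q hp hq hpq (max A T) with h2 | h2 <;> rw [h1, h2] <;> norm_num
  · rw [Finset.Ico_eq_empty (by omega)]
    simp

theorem aC_abs (p q : ℕ) (hp : p.Prime) (hq : q.Prime) (hpq : p < q) (n : ℕ) :
    |aC p q n| ≤ 1 := by
  simpa using window p q hp hq hpq n (n + 1) 0

theorem aC_sign (p q : ℕ) (hp : p.Prime) (hq : q.Prime) (hpq : p < q) (n : ℕ) :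
    |aC p q n * (-1) ^ n| ≤ 1 := by
  rw [abs_mul, abs_pow, abs_neg, abs_one, one_pow, mul_one]
  exact aC_abs p q hp hq hpq n

theorem FF_bound (p q : ℕ) (hp : p.Prime) (hq : q.Prime) (hp3 : 3 ≤ p) (hpq : p < q)
    (hpo : Odd p) (hqo : Odd q) (L : ℕ) (N₀ : ℤ) : |FF p q L N₀| ≤ 2 := by
  rcases Nat.eq_zero_or_pos L with rfl | hL
  · simp [FF]
  obtain ⟨M, rfl⟩ : ∃ M, L = M + 1 := ⟨L - 1, by omega⟩
  have hlt : p + q ≤ p * q := by nlinarith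
  obtain ⟨w, hw⟩ : ∃ w, w = p * q := ⟨_, rfl⟩
  have hchi : ∀ u : ℤ, 0 ≤ u → u < w → chiF p q u = 
      (if u < p then 1 else 0) - (if (q : ℤ) ≤ u ∧ u < q + p then 1 else 0) := by
    intro u h0 h1
    unfold chiF
    rw [← hw, Int.emod_eq_of_lt h0 h1]
  have hw0 : (0 : ℤ) < w := by omega
  obtain ⟨t, ht⟩ : ∃ t : ℕ, (t : ℤ) = (N₀ - 2 * M) % w :=
    ⟨((N₀ - 2 * M) % w).toNat, Int.toNat_of_nonneg (Int.emod_nonneg _ hw0.ne')⟩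
  have htw : t < w := by
    have := Int.emod_lt_of_pos (N₀ - 2 * M) hw0
    omega
  have hN : N₀ ≡ ((2 * M + t : ℕ) : ℤ) [ZMOD ((p * q : ℕ) : ℤ)] := by
    rw [← hw]
    push_cast
    rw [ht]
    have := (Int.mod_modEq (N₀ - 2 * M) w).symm.add_left (2 * M)
    rwa [add_sub_cancel] at this
  rw [FF_congr p q _ hN]
  obtain ⟨N, hNN⟩ : ∃ N, N = 2 * M + t := ⟨_, rfl⟩
  rw [← hNN]
  by_cases hc : t < q + 2
  · have h1 := FF_full p q hp hq hp3 hpq hpo hqo N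
    have h2 : FF p q (N / 2 + 1) N = FF p q (M + 1) N +
        ∑ m ∈ Finset.Ico (M + 1) (N / 2 + 1), 
          aC p q m * (if (N + 2 - p) / 2 ≤ m then 1 else 0) := by
      unfold FF
      rw [← Finset.sum_range_add_sum_Ico _ (show M + 1 ≤ N / 2 + 1 by omega)]
      congr 1
      refine Finset.sum_congr rfl fun m hm => ?_
      rw [Finset.mem_Ico] at hm
      rw [hchi _ (by omega) (by omega)]
      congr 1
      split_ifs <;> omega
    have h3 := window p q hp hq hpq (M + 1) (N / 2 + 1) ((N + 2 - p) / 2)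
    have h4 := aC_sign p q hp hq hpq N
    rw [abs_le] at *
    constructor <;> linarith [h3.1, h3.2, h4.1, h4.2]
  · have h2 : ∀ B, B ≤ M + 1 → N < 2 * B + w → 
        ∑ m ∈ Finset.Ico B (M + 1), aC p q m * chiF p q (N - 2 * m) =
        - ∑ m ∈ Finset.Ico B (M + 1), 
          aC p q m * (if (N + 2 - (p + q)) / 2 ≤ m then 1 else 0) := by
      intro B hB hBw
      rw [← Finset.sum_neg_distrib]
      refine Finset.sum_congr rfl fun m hm => ?_
      rw [Finset.mem_Ico] at hm
      rw [hchi _ (by omega) (by omega), ← mul_neg]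
      congr 1
      split_ifs <;> omega
    by_cases hNw : N < w
    · have h3 := h2 0 (by omega) (by omega)
      have h4 := window p q hp hq hpq 0 (M + 1) ((N + 2 - (p + q)) / 2)
      unfold FF
      rw [Finset.range_eq_Ico, h3, abs_neg]
      omega
    · obtain ⟨N', hN'⟩ : ∃ N', N = N' + w := ⟨N - w, by omega⟩
      have h3 := h2 (N' / 2 + 1) (by omega) (by omega)
      have h4 := window p q hp hq hpq (N' / 2 + 1) (M + 1) ((N + 2 - (p + q)) / 2)
      have h5 := FF_full p q hp hq hp3 hpq hpo hqo N'
      have h6 := aC_sign p q hp hq hpq N'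
      have h7 : FF p q (N' / 2 + 1) N = FF p q (N' / 2 + 1) N' := by
        apply FF_congr
        rw [← hw, hN']
        push_cast
        exact Int.add_modEq_right
      have h8 : FF p q (M + 1) N = FF p q (N' / 2 + 1) N + 
        ∑ m ∈ Finset.Ico (N' / 2 + 1) (M + 1), aC p q m * chiF p q (N - 2 * m) := by
        unfold FF
        rw [← Finset.sum_range_add_sum_Ico _ (show N' / 2 + 1 ≤ M + 1 by omega)]
      rw [h8, h7, h5, h3]
      rw [abs_le] at *
      constructor <;> linarith [h4.1, h4.2, h6.1, h6.2]

theorem aC_zero (p q n : ℕ) (h : (Polynomial.cyclotomic (p * q) ℤ).natDegree < n) :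
    aC p q n = 0 := Polynomial.coeff_eq_zero_of_natDegree_lt h

theorem FF_zero (p q : ℕ) (hp : p.Prime) (hq : q.Prime) (hp3 : 3 ≤ p) (hpq : p < q)
    (hpo : Odd p) (hqo : Odd q) (N₀ : ℤ) :
    FF p q ((Polynomial.cyclotomic (p * q) ℤ).natDegree + 1) N₀ = 0 := by
  obtain ⟨d, hd⟩ : ∃ d, d = (Polynomial.cyclotomic (p * q) ℤ).natDegree := ⟨_, rfl⟩
  rw [← hd]
  have hw0 : 0 < p * q := Nat.mul_pos hp.pos hq.pos
  obtain ⟨w, hw⟩ : ∃ w, w = p * q := ⟨_, rfl⟩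
  rw [← hw] at hw0
  obtain ⟨t, ht⟩ : ∃ t : ℕ, (t : ℤ) = (N₀ - 2 * (d + 1)) % w :=
    ⟨((N₀ - 2 * (d + 1)) % w).toNat, Int.toNat_of_nonneg (Int.emod_nonneg _ (by omega))⟩
  have hN : N₀ ≡ ((2 * (d + 1) + t : ℕ) : ℤ) [ZMOD ((p * q : ℕ) : ℤ)] := by
    rw [← hw]
    push_cast
    rw [ht]
    have := (Int.mod_modEq (N₀ - 2 * (d + 1)) w).symm.add_left (2 * (d + 1))
    rwa [add_sub_cancel] at this
  rw [FF_congr p q _ hN]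
  obtain ⟨N, hNN⟩ : ∃ N, N = 2 * (d + 1) + t := ⟨_, rfl⟩
  rw [← hNN]
  have h1 := FF_full p q hp hq hp3 hpq hpo hqo N
  rw [aC_zero p q N (by omega), zero_mul] at h1
  rw [← h1]
  unfold FF
  apply Finset.sum_subset
  · intro m hm
    rw [Finset.mem_range] at *
    omega
  · intro m _ hm
    rw [Finset.mem_range] at hm
    rw [aC_zero p q m (by omega), zero_mul]

theorem FF_neg (p q : ℕ) (hp : p.Prime) (hq : q.Prime) (hp3 : 3 ≤ p) (hpq : p < q)
    (hpo : Odd p) (hqo : Odd q) (L : ℕ) (N : ℤ) :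
    ∑ m ∈ Finset.range L, aC p q m * chiF p q (N + 2 * m) =
      - FF p q ((Polynomial.cyclotomic (p * q) ℤ).natDegree + 1 - L)
        (N + 2 * (Polynomial.cyclotomic (p * q) ℤ).natDegree) := by
  have hz := FF_zero p q hp hq hp3 hpq hpo hqo
    (N + 2 * (Polynomial.cyclotomic (p * q) ℤ).natDegree)
  have hpal := palin p q hp hq hpq
  have haz := aC_zero p q
  obtain ⟨d, hd⟩ : ∃ d, d = (Polynomial.cyclotomic (p * q) ℤ).natDegree := ⟨_, rfl⟩
  rw [← hd] at hz hpal haz ⊢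
  have main : ∀ L, L ≤ d + 1 → ∑ m ∈ Finset.range L, aC p q m * chiF p q (N + 2 * m) =
      - FF p q (d + 1 - L) (N + 2 * d) := by
    intro L hL
    induction L with
    | zero => simp [hz]
    | succ k ih =>
      rw [Finset.sum_range_succ, ih (by omega)]
      have e : d + 1 - k = (d + 1 - (k + 1)) + 1 := by omega
      rw [e]
      unfold FF
      rw [Finset.sum_range_succ]
      have e2 : aC p q (d + 1 - (k + 1)) = aC p q k := by
        unfold aC
        rw [← hpal k (by omega)]
        congr 1
        omega
      have e3 : (N + 2 * d - 2 * ((d + 1 - (k + 1) : ℕ) : ℤ)) = N + 2 * k := by omega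
      rw [e2, e3]
      ring
  by_cases hL : L ≤ d + 1
  · exact main L hL
  · have h1 := main (d + 1) le_rfl
    have e : d + 1 - L = d + 1 - (d + 1) := by omega
    rw [e, ← h1]
    symm
    apply Finset.sum_subset
    · intro m hm
      rw [Finset.mem_range] at *
      omega
    · intro m _ hm
      rw [Finset.mem_range] at hm
      rw [haz m (by omega), zero_mul]

/-- The arithmetic heart of the lower bound. -/
theorem exists_MN (p q : ℕ) (hp : p.Prime) (hq : q.Prime) (hp3 : 3 ≤ p) (hpq : p < q)
    (hpo : Odd p) (hqo : Odd q) (hq1 : ¬ q ≡ 1 [MOD p]) :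
    ∃ M h : ℕ, 0 < h ∧ 2 * h < p ∧ M ≤ q ∧ inS p q M ∧ ¬ inS p q (M + h) ∧
      inS p q (2 * (M + h)) ∧ ¬ inS p q (2 * (M + h) - 1) := by
  obtain ⟨k, hk⟩ : ∃ k, k = q / p := ⟨_, rfl⟩
  obtain ⟨s, hs⟩ : ∃ s, s = q % p := ⟨_, rfl⟩
  have hq' : q = p * k + s := by rw [hk, hs]; exact (Nat.div_add_mod q p).symm
  have hsp : s < p := by rw [hs]; exact Nat.mod_lt _ hp.pos
  have hs0 : s ≠ 0 := by
    intro h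
    have h1 : p ∣ q := Nat.dvd_of_mod_eq_zero (by omega)
    exact hpq.ne ((Nat.prime_dvd_prime_iff_eq hp hq).1 h1)
  have hs1 : s ≠ 1 := by
    intro h
    apply hq1
    unfold Nat.ModEq
    rw [← hs, h, Nat.mod_eq_of_lt (by omega)]
  have hk1 : 1 ≤ k := by
    by_contra h
    have : k = 0 := by omega
    subst this
    omega
  clear hk hs hq1
  have hodd : (p : ℤ) % 2 = 1 := by obtain ⟨c, hc⟩ := hpo; omega
  have hqodd : (q : ℤ) % 2 = 1 := by obtain ⟨c, hc⟩ := hqo; omega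
  -- no two distinct multiples of `p` are close
  have nomul : ∀ a b c : ℕ, a * p = b * p + c → 0 < c → c < p → False := by
    intro a b c h h0 h1
    have h2 : p ∣ c := by
      have : p ∣ b * p + c := ⟨a, by rw [← h]; ring⟩
      exact (Nat.dvd_add_right ⟨b, by ring⟩).1 this
    have := Nat.le_of_dvd h0 h2
    omega
  rcases Nat.even_or_odd k with ⟨j, hj⟩ | ⟨j, hj⟩
  · -- `k = 2 * j`
    have hkp : p * k = 2 * (j * p) := by rw [hj]; ring
    have hjp : p ≤ j * p := Nat.le_mul_of_pos_left p (by omega)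
    obtain ⟨h, hh⟩ : ∃ h, p - s = 2 * h := ⟨(p - s) / 2, by omega⟩
    refine ⟨q, h, by omega, by omega, le_rfl, ⟨0, 1, by ring⟩, ?_, ⟨k + 1, 1, ?_⟩, ?_⟩
    · rintro ⟨x, y, hxy⟩
      rcases y with _ | _ | y
      · have hx : x * p = (2 * j) * p + (s + h) := by
          have : (2 * j) * p = 2 * (j * p) := by ring
          omega
        exact nomul _ _ _ hx (by omega) (by omega)
      · have hx : x * p = 0 * p + h := by omega
        exact nomul _ _ _ hx (by omega) (by omega)
      · have e : (y + 1 + 1) * q = y * q + 2 * q := by ring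
        have : q + h < 2 * q := by omega
        omega
    · have : (k + 1) * p = p * k + p := by ring
      omega
    · rintro ⟨x, y, hxy⟩
      rcases y with _ | _ | _ | y
      · have hx : x * p = (4 * j + 1) * p + (s - 1) := by
          have : (4 * j + 1) * p = 4 * (j * p) + p := by ring
          omega
        exact nomul _ _ _ hx (by omega) (by omega)
      · have hx : x * p = (2 * j) * p + (p - 1) := by
          have : (2 * j) * p = 2 * (j * p) := by ring
          omega
        exact nomul _ _ _ hx (by omega) (by omega)
      · have hx : x * p = 0 * p + (2 * h - 1) := by omega
        exact nomul _ _ _ hx (by omega) (by omega)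
      · have e : (y + 1 + 1 + 1) * q = y * q + 3 * q := by ring
        omega
  · -- `k = 2 * j + 1`
    have hkp : p * k = 2 * (j * p) + p := by rw [hj]; ring
    obtain ⟨h, hh⟩ : ∃ h, s = 2 * h := ⟨s / 2, by omega⟩
    have e1 : (j + 1) * p = j * p + p := by ring
    refine ⟨(j + 1) * p, h, by omega, by omega, by omega, ⟨j + 1, 0, by ring⟩, ?_,
      ⟨1, 1, by omega⟩, ?_⟩
    · rintro ⟨x, y, hxy⟩
      rcases y with _ | y
      · have hx : x * p = (j + 1) * p + h := by omega
        exact nomul _ _ _ hx (by omega) (by omega)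
      · have e : (y + 1) * q = y * q + q := by ring
        omega
    · rintro ⟨x, y, hxy⟩
      rcases y with _ | _ | y
      · have hx : x * p = (2 * j + 2) * p + (s - 1) := by
          have : (2 * j + 2) * p = 2 * (j * p) + 2 * p := by ring
          omega
        exact nomul _ _ _ hx (by omega) (by omega)
      · have hx : x * p = 0 * p + (p - 1) := by omega
        exact nomul _ _ _ hx (by omega) (by omega)
      · have e : (y + 1 + 1) * q = y * q + 2 * q := by ring
        omega

theorem FF_two (p q : ℕ) (hp : p.Prime) (hq : q.Prime) (hp3 : 3 ≤ p) (hpq : p < q)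
    (hpo : Odd p) (hqo : Odd q) (M h : ℕ) (h0 : 0 < h) (hhp : 2 * h < p)
    (hM : inS p q M) (hMh : ¬ inS p q (M + h)) (hN : inS p q (2 * (M + h)))
    (hN1 : ¬ inS p q (2 * (M + h) - 1)) :
    FF p q (M + 1) (2 * M + 2 * h) = 2 := by
  have hlt : p + q ≤ p * q := by nlinarith
  have h1 := FF_full p q hp hq hp3 hpq hpo hqo (2 * (M + h))
  have e : 2 * (M + h) / 2 = M + h := by omega
  have h2 : aC p q (2 * (M + h)) = 1 := by
    have := sum_a' p q hp hq hpq (2 * (M + h) - 1) (2 * (M + h)) (by omega)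
    rw [show 2 * (M + h) - 1 + 1 = 2 * (M + h) by omega, Finset.sum_Ico_eq_sub _ (by omega),
      Finset.sum_range_succ, add_sub_cancel_left] at this
    rw [this]
    simp [sInd, hN, hN1]
  have h3 := sum_a' p q hp hq hpq M (M + h) (by omega)
  have h4 : sInd p q (M + h) - sInd p q M = -1 := by simp [sInd, hM, hMh]
  have h5 : FF p q (M + h + 1) ((2 * (M + h) : ℕ) : ℤ) = FF p q (M + 1) ((2 * (M + h) : ℕ) : ℤ) +
      ∑ m ∈ Finset.Ico (M + 1) (M + h + 1), aC p q m := by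
    unfold FF
    rw [← Finset.sum_range_add_sum_Ico _ (show M + 1 ≤ M + h + 1 by omega)]
    congr 1
    refine Finset.sum_congr rfl fun m hm => ?_
    rw [Finset.mem_Ico] at hm
    unfold chiF
    generalize p * q = w at *
    rw [Int.emod_eq_of_lt (by omega) (by omega), if_pos (by omega), if_neg (by omega)]
    ring
  rw [e, h2, h5, h3, h4] at h1
  rw [pow_mul] at h1
  push_cast at h1
  norm_num at h1
  rw [mul_add] at h1
  linarith

theorem height_of (p q r : ℕ) 
    (hub : ∀ n, |(Polynomial.cyclotomic (p * q * r) ℤ).coeff n| ≤ 2)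
    (hlb : ∃ n, |(Polynomial.cyclotomic (p * q * r) ℤ).coeff n| = 2) :
    cyclotomicHeight (p * q * r) = 2 := by
  unfold cyclotomicHeight
  apply le_antisymm
  · apply Finset.sup_le
    intro n _
    have := hub n
    rw [Int.abs_eq_natAbs] at this
    omega
  · obtain ⟨n, hn⟩ := hlb
    have h2 : ((Polynomial.cyclotomic (p * q * r) ℤ).coeff n).natAbs = 2 := by
      rw [Int.abs_eq_natAbs] at hn
      omega
    have hmem : n ∈ (Polynomial.cyclotomic (p * q * r) ℤ).support := by
      rw [Polynomial.mem_support_iff]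
      intro h
      rw [h] at h2
      simp at h2
    have := Finset.le_sup
      (f := fun k => ((Polynomial.cyclotomic (p * q * r) ℤ).coeff k).natAbs) hmem
    simp only [h2] at this
    exact this

theorem cyclotomic_pqr_height_eq_two (p q r : ℕ)
    (hp : p.Prime) (hq : q.Prime) (hr : r.Prime)
    (hpo : Odd p) (hqo : Odd q) (hro : Odd r)
    (hpq : p < q) (hqr : q < r)
    (hmod : (r : ℤ) ≡ 2 [ZMOD ((p * q : ℕ) : ℤ)] ∨
      (r : ℤ) ≡ -2 [ZMOD ((p * q : ℕ) : ℤ)])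
    (hq1 : ¬ q ≡ 1 [MOD p]) :
    cyclotomicHeight (p * q * r) = 2 := by
  have hp3 : 3 ≤ p := by
    have := hp.two_le
    obtain ⟨c, hc⟩ := hpo
    omega
  have hrn : ¬ r ∣ p * q := by
    intro h
    rcases (Nat.Prime.dvd_mul hr).1 h with h | h
    · have := Nat.le_of_dvd hp.pos h
      omega
    · have := Nat.le_of_dvd hq.pos h
      omega
  have hexp := Polynomial.cyclotomic_expand_eq_cyclotomic_mul hr hrn ℤ
  have hco := key_coeff p q hp hq hp3 hpq r hr.pos _ hexp
  obtain ⟨M, h, h0, hhp, hMq, hM, hMh, hN, hN1⟩ := exists_MN p q hp hq hp3 hpq hpo hqo hq1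
  have h2 := FF_two p q hp hq hp3 hpq hpo hqo M h h0 hhp hM hMh hN hN1
  rcases hmod with hmod | hmod
  · have hF : ∀ n, (Polynomial.cyclotomic (p * q * r) ℤ).coeff n = FF p q (n / r + 1) n := by
      intro n
      rw [hco n]
      unfold FF
      refine Finset.sum_congr rfl fun m _ => ?_
      rw [chiF_congr p q ((hmod.mul_right (m : ℤ)).sub_left (n : ℤ))]
      rfl
    apply height_of
    · intro n
      rw [hF]
      exact FF_bound p q hp hq hp3 hpq hpo hqo _ _
    · refine ⟨r * M + 2 * h, ?_⟩
      rw [hF]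
      have e : (r * M + 2 * h) / r = M := by
        rw [Nat.mul_add_div hr.pos, Nat.div_eq_of_lt (by omega), add_zero]
      have e2 : ((r * M + 2 * h : ℕ) : ℤ) ≡ 2 * M + 2 * h [ZMOD ((p * q : ℕ) : ℤ)] := by
        push_cast
        exact_mod_cast (hmod.mul_right (M : ℤ)).add_right (2 * h : ℤ)
      rw [e, FF_congr p q _ e2, h2]
      rfl
  · have hF : ∀ n, (Polynomial.cyclotomic (p * q * r) ℤ).coeff n =
        - FF p q ((Polynomial.cyclotomic (p * q) ℤ).natDegree + 1 - (n / r + 1))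
        (n + 2 * (Polynomial.cyclotomic (p * q) ℤ).natDegree) := by
      intro n
      rw [hco n, ← FF_neg p q hp hq hp3 hpq hpo hqo]
      refine Finset.sum_congr rfl fun m _ => ?_
      rw [chiF_congr p q ((hmod.mul_right (m : ℤ)).sub_left (n : ℤ))]
      rw [neg_mul, sub_neg_eq_add]
      rfl
    apply height_of
    · intro n
      rw [hF, abs_neg]
      exact FF_bound p q hp hq hp3 hpq hpo hqo _ _
    · have hdeg : M + 1 ≤ (Polynomial.cyclotomic (p * q) ℤ).natDegree := by
        rw [Polynomial.natDegree_cyclotomic,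
          Nat.totient_mul ((Nat.coprime_primes hp hq).2 hpq.ne), Nat.totient_prime hp,
          Nat.totient_prime hq]
        have : 2 * (q - 1) ≤ (p - 1) * (q - 1) := Nat.mul_le_mul_right _ (by omega)
        omega
      generalize (Polynomial.cyclotomic (p * q) ℤ).natDegree = d at *
      refine ⟨r * (d - 1 - M) + (2 * h - 2), ?_⟩
      rw [hF]
      have e : (r * (d - 1 - M) + (2 * h - 2)) / r = d - 1 - M := by
        rw [Nat.mul_add_div hr.pos, Nat.div_eq_of_lt (by omega), add_zero]
      have e2 : ((r * (d - 1 - M) + (2 * h - 2) : ℕ) : ℤ) + 2 * d ≡ 2 * M + 2 * h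
          [ZMOD ((p * q : ℕ) : ℤ)] := by
        have := ((hmod.mul_right ((d - 1 - M : ℕ) : ℤ)).add_right ((2 * h - 2 : ℕ) : ℤ)).add_right
          (2 * d : ℤ)
        rw [show -2 * ((d - 1 - M : ℕ) : ℤ) + ((2 * h - 2 : ℕ) : ℤ) + 2 * (d : ℤ) =
          2 * M + 2 * h by omega] at this
        rw [Nat.cast_add, Nat.cast_mul]
        exact this
      have e3 : d + 1 - (d - 1 - M + 1) = M + 1 := by omega
      rw [e, e3, FF_congr p q _ e2, h2]
      rfl
end
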